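/- arXiv:2510.07753 — 2 statements merged into one kernel-verified Lean document; each statement's English description precedes it below -/
import Mathlib

section
/- Let 3 ≤ n ≤ 7, let k ≥ 1, and let Γ be a k-homogeneous access structure on n players satisfying monotonicity, no-cloning and no-redundancy that admits a pure QSS state. Then either n = 5, k = 3 and Γ is the 3-threshold structure (Γ_min is the family of all 3-element subsets of {1,…,5}), or n = 7, k = 3, |Γ_min| = 7 and every 2-element subset of {1,…,7} is contained in exactly one set of Γ_min (Γ_min is a Fano plane). -/
open Finset

/-- Monotonicity of an access structure on `n` players (players = `Fin n`). -/
def Monotonic {n : ℕ} (Γ : Finset (Fin n) → Prop) : Prop :=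
  ∀ A B : Finset (Fin n), Γ A → A ⊆ B → Γ B

/-- No-cloning: a set is authorized iff its complement is not. -/
def NoCloning {n : ℕ} (Γ : Finset (Fin n) → Prop) : Prop :=
  ∀ A : Finset (Fin n), Γ A ↔ ¬ Γ Aᶜ

/-- `A` is a minimal authorized set of `Γ`. -/
def IsMinimal {n : ℕ} (Γ : Finset (Fin n) → Prop) (A : Finset (Fin n)) : Prop :=
  Γ A ∧ ∀ B : Finset (Fin n), B ⊂ A → ¬ Γ B

/-- No-redundancy: every player lies in some minimal authorized set. -/
def NoRedundancy {n : ℕ} (Γ : Finset (Fin n) → Prop) : Prop :=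
  ∀ i : Fin n, ∃ A : Finset (Fin n), IsMinimal Γ A ∧ i ∈ A

noncomputable section

/-- Combine an assignment on `A` and one on `Aᶜ` into a full bit string. -/
def glue {m : ℕ} (A : Finset (Fin m)) (u : {x // x ∈ A} → Fin 2)
    (w : {x // x ∈ Aᶜ} → Fin 2) : Fin m → Fin 2 :=
  fun x => if h : x ∈ A then u ⟨x, h⟩ else w ⟨x, Finset.mem_compl.mpr h⟩

/-- Reduced density matrix of the pure state `ψ` on the qubit positions in `A`:
the partial trace over the positions outside `A` of `ψψ†`. -/
def reducedDensity {m : ℕ} (ψ : (Fin m → Fin 2) → ℂ) (A : Finset (Fin m)) :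
    Matrix ({x // x ∈ A} → Fin 2) ({x // x ∈ A} → Fin 2) ℂ :=
  fun u v => ∑ w : {x // x ∈ Aᶜ} → Fin 2,
    ψ (glue A u w) * (starRingEnd ℂ) (ψ (glue A v w))

/-- The reduction of `ψ` to `A` is maximally mixed, i.e. equals `2^{-|A|} · I`. -/
def MaximallyMixed {m : ℕ} (ψ : (Fin m → Fin 2) → ℂ) (A : Finset (Fin m)) : Prop :=
  reducedDensity ψ A =
    ((2 : ℂ) ^ A.card)⁻¹ •
      (1 : Matrix ({x // x ∈ A} → Fin 2) ({x // x ∈ A} → Fin 2) ℂ)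

open Classical in
/-- Von Neumann entropy (natural logarithm): sum of `-λ log λ` over the eigenvalues. -/
def vnEntropy {ι : Type} [Fintype ι] [DecidableEq ι] (ρ : Matrix ι ι ℂ) : ℝ :=
  if h : ρ.IsHermitian then ∑ i, Real.negMulLog (h.eigenvalues i) else 0

/-- Entropy of the reduction of `ψ` to the set `A` of qubit positions. -/
def Sent {m : ℕ} (ψ : (Fin m → Fin 2) → ℂ) (A : Finset (Fin m)) : ℝ :=
  vnEntropy (reducedDensity ψ A)

/-- The qubit positions (in `{0,1,…,n} = Fin (n+1)`, where `0` is the reference qubit)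
of a set of players `A ⊆ Fin n`: player `i` holds position `i.succ`. -/
def posOf {n : ℕ} (A : Finset (Fin n)) : Finset (Fin (n + 1)) := A.image Fin.succ

/-- `ψ` is a pure QSS state for the access structure `Γ`: a normalized pure state of
`n+1` qubits (position `0` being the reference qubit `R`) satisfying Recoverability
`S(R) + S(A) - S(R ∪ A) = 2 log 2` for authorized `A` and Secrecy
`S(R) + S(B) - S(R ∪ B) = 0` for unauthorized `B`. -/
structure IsPureQSSState {n : ℕ} (Γ : Finset (Fin n) → Prop)
    (ψ : (Fin (n + 1) → Fin 2) → ℂ) : Prop where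
  normalized : ∑ x : Fin (n + 1) → Fin 2, ‖ψ x‖ ^ 2 = 1
  recover : ∀ A : Finset (Fin n), Γ A →
    Sent ψ {0} + Sent ψ (posOf A) - Sent ψ (insert 0 (posOf A)) = 2 * Real.log 2
  secrecy : ∀ B : Finset (Fin n), ¬ Γ B →
    Sent ψ {0} + Sent ψ (posOf B) - Sent ψ (insert 0 (posOf B)) = 0

end

section part1
open Finset

lemma vn_eq {ι : Type} [Fintype ι] [DecidableEq ι] {ρ : Matrix ι ι ℂ} (h : ρ.IsHermitian) :
    vnEntropy ρ = (ρ.charpoly.roots.map (fun z => Real.negMulLog z.re)).sum := by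
  unfold vnEntropy
  rw [dif_pos h, h.roots_charpoly_eq_eigenvalues, Multiset.map_map]
  simp

lemma vn_diag {ι : Type} [Fintype ι] [DecidableEq ι] (V : Matrix ι ι ℂ)
    (hV : V.conjTranspose * V = 1) (μ : ι → ℝ) :
    vnEntropy (V * Matrix.diagonal (fun i => (μ i : ℂ)) * V.conjTranspose)
      = ∑ i, Real.negMulLog (μ i) := by
  have hh : (V * Matrix.diagonal (fun i => (μ i : ℂ)) * V.conjTranspose).IsHermitian := by
    apply Matrix.isHermitian_mul_mul_conjTranspose
    rw [Matrix.IsHermitian, Matrix.diagonal_conjTranspose]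
    congr 1
    ext i
    simp
  rw [vn_eq hh, Matrix.mul_assoc, Matrix.charpoly_mul_comm, Matrix.mul_assoc, hV, Matrix.mul_one,
    Matrix.charpoly_diagonal, Polynomial.roots_prod]
  · simp [Multiset.map_map]
  · exact Finset.prod_ne_zero_iff.mpr fun i _ => Polynomial.X_sub_C_ne_zero _

lemma vn_reindex {ι κ : Type} [Fintype ι] [DecidableEq ι] [Fintype κ] [DecidableEq κ]
    {ρ : Matrix ι ι ℂ} (h : ρ.IsHermitian) (e : κ ≃ ι) :
    vnEntropy (ρ.submatrix e e) = vnEntropy ρ := by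
  rw [vn_eq h, vn_eq (h.submatrix e)]
  have := Matrix.charpoly_reindex e.symm ρ
  rw [Matrix.reindex_apply] at this
  simp only [Equiv.symm_symm] at this
  rw [this]

lemma vn_transpose {ι : Type} [Fintype ι] [DecidableEq ι]
    {ρ : Matrix ι ι ℂ} (h : ρ.IsHermitian) :
    vnEntropy ρ.transpose = vnEntropy ρ := by
  rw [vn_eq h, vn_eq h.transpose, Matrix.charpoly_transpose]

lemma vn_mul_comm {ι κ : Type} [Fintype ι] [DecidableEq ι] [Fintype κ] [DecidableEq κ]
    (M : Matrix ι κ ℂ) :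
    vnEntropy (M * M.conjTranspose) = vnEntropy (M.conjTranspose * M) := by
  rw [vn_eq (Matrix.isHermitian_mul_conjTranspose_self M),
    vn_eq (Matrix.isHermitian_conjTranspose_mul_self M)]
  have h := Matrix.charpoly_mul_comm' M M.conjTranspose
  have h2 := congrArg Polynomial.roots h
  rw [Polynomial.roots_mul, Polynomial.roots_mul, Polynomial.roots_X_pow,
    Polynomial.roots_X_pow] at h2
  · have h3 := congrArg (fun s => (Multiset.map (fun z : ℂ => Real.negMulLog z.re) s).sum) h2
    simpa [Multiset.map_nsmul, Multiset.sum_nsmul] using h3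
  · exact mul_ne_zero (pow_ne_zero _ Polynomial.X_ne_zero) (Matrix.charpoly_monic _).ne_zero
  · exact mul_ne_zero (pow_ne_zero _ Polynomial.X_ne_zero) (Matrix.charpoly_monic _).ne_zero

lemma kl_term {l m : ℝ} (hl : 0 ≤ l) (hm : 0 < m) :
    0 ≤ l * Real.log l - l * Real.log m - l + m ∧
    (l * Real.log l - l * Real.log m - l + m = 0 → l = m) := by
  have key : l * Real.log l - l * Real.log m - l + m = m * InformationTheory.klFun (l / m) := by
    rw [InformationTheory.klFun_apply]
    rcases hl.eq_or_lt with rfl | hl'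
    · simp
    · rw [Real.log_div hl'.ne' hm.ne']
      field_simp
      ring
  rw [key]
  refine ⟨mul_nonneg hm.le (InformationTheory.klFun_nonneg (by positivity)), fun h => ?_⟩
  have h0 := (mul_eq_zero.mp h).resolve_left hm.ne'
  rw [InformationTheory.klFun_eq_zero_iff (by positivity)] at h0
  field_simp at h0
  exact h0

open scoped ComplexOrder in
lemma klein {ι : Type} [Fintype ι] [DecidableEq ι] {ρ : Matrix ι ι ℂ} (hρ : ρ.PosSemidef)
    (htr : ρ.trace = 1) (V : Matrix ι ι ℂ) (hV : V.conjTranspose * V = 1) (μ : ι → ℝ)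
    (hμ : ∀ i, 0 ≤ μ i) (hμ1 : ∑ i, μ i = 1)
    (hs : ∀ i, μ i = 0 → ((V.conjTranspose * ρ * V) i i).re = 0) :
    vnEntropy ρ ≤ - ∑ i, ((V.conjTranspose * ρ * V) i i).re * Real.log (μ i) ∧
    (vnEntropy ρ = - ∑ i, ((V.conjTranspose * ρ * V) i i).re * Real.log (μ i) →
      ρ = V * Matrix.diagonal (fun i => (μ i : ℂ)) * V.conjTranspose) := by
  classical
  have hV' : V * V.conjTranspose = 1 := mul_eq_one_comm.mp hV
  set l := hρ.isHermitian.eigenvalues with hl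
  set U : Matrix ι ι ℂ := (hρ.isHermitian.eigenvectorUnitary).1 with hU
  have hUU : U * U.conjTranspose = 1 := Unitary.coe_mul_star_self hρ.isHermitian.eigenvectorUnitary
  have hUU' : U.conjTranspose * U = 1 := mul_eq_one_comm.mp hUU
  have hsp : ρ = U * Matrix.diagonal (fun i => (l i : ℂ)) * U.conjTranspose :=
    hρ.isHermitian.spectral_theorem
  have hl0 : ∀ i, 0 ≤ l i := hρ.eigenvalues_nonneg
  set W := V.conjTranspose * U with hW
  have hWW : W * W.conjTranspose = 1 := by
    rw [hW, Matrix.conjTranspose_mul, Matrix.conjTranspose_conjTranspose, Matrix.mul_assoc,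
      ← Matrix.mul_assoc U, hUU, Matrix.one_mul, hV]
  have hWW' : W.conjTranspose * W = 1 := mul_eq_one_comm.mp hWW
  have hVW : V * W = U := by rw [hW, ← Matrix.mul_assoc, hV', Matrix.one_mul]
  have hconj : V.conjTranspose * ρ * V
      = W * Matrix.diagonal (fun i => (l i : ℂ)) * W.conjTranspose := by
    rw [hsp, hW, Matrix.conjTranspose_mul, Matrix.conjTranspose_conjTranspose]
    simp only [Matrix.mul_assoc]
  set D : ι → ι → ℝ := fun i j => ‖W i j‖ ^ 2 with hD
  have hDn : ∀ i j, 0 ≤ D i j := fun i j => by positivity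
  have hcs : ∀ z : ℂ, z * star z = ((‖z‖ ^ 2 : ℝ) : ℂ) := by
    intro z
    have := Complex.mul_conj' z
    push_cast
    exact this
  have hrow : ∀ i, ∑ j, D i j = 1 := by
    intro i
    have := congrFun (congrFun hWW i) i
    rw [Matrix.mul_apply, Matrix.one_apply_eq] at this
    simp only [Matrix.conjTranspose_apply, hcs] at this
    exact_mod_cast this
  have hcol : ∀ j, ∑ i, D i j = 1 := by
    intro i
    have := congrFun (congrFun hWW' i) i
    rw [Matrix.mul_apply, Matrix.one_apply_eq] at this
    simp only [Matrix.conjTranspose_apply, mul_comm, hcs] at this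
    exact_mod_cast this
  set q : ι → ℝ := fun i => ((V.conjTranspose * ρ * V) i i).re with hq
  have hqD : ∀ i, q i = ∑ j, D i j * l j := by
    intro i
    have : (V.conjTranspose * ρ * V) i i = ((∑ j, D i j * l j : ℝ) : ℂ) := by
      rw [hconj, Matrix.mul_apply]
      push_cast
      refine Finset.sum_congr rfl fun j _ => ?_
      rw [Matrix.mul_diagonal, Matrix.conjTranspose_apply, mul_right_comm, hcs]
    simp only [hq, this, Complex.ofReal_re]
  have hl1 : ∑ j, l j = 1 := by
    have := hρ.isHermitian.trace_eq_sum_eigenvalues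
    rw [htr] at this
    have h2 := congrArg Complex.re this
    simp only [Complex.one_re, Complex.re_sum] at h2
    exact h2.symm
  have hvn : vnEntropy ρ = ∑ j, Real.negMulLog (l j) := by
    unfold vnEntropy
    rw [dif_pos hρ.isHermitian]
  set t : ι → ι → ℝ := fun i j =>
    D i j * (l j * Real.log (l j) - l j * Real.log (μ i) - l j + μ i) with ht
  have hzero : ∀ i, μ i = 0 → ∀ j, D i j * l j = 0 := by
    intro i hi j
    have h0 := hs i hi
    change q i = 0 at h0
    rw [hqD] at h0
    exact (Finset.sum_eq_zero_iff_of_nonneg (fun j _ => mul_nonneg (hDn i j) (hl0 j))).mp h0 j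
      (mem_univ _)
  have htn : ∀ i j, 0 ≤ t i j := by
    intro i j
    rcases (hμ i).eq_or_lt with h | h
    · rcases mul_eq_zero.mp (hzero i h.symm j) with h1 | h1
      · simp [ht, h1]
      · simp [ht, h1, ← h]
    · exact mul_nonneg (hDn i j) (kl_term (hl0 j) h).1
  have hsum : ∑ i, ∑ j, t i j = - ∑ i, q i * Real.log (μ i) - vnEntropy ρ := by
    have e1 : ∑ i, ∑ j, D i j * (l j * Real.log (l j)) = - vnEntropy ρ := by
      rw [Finset.sum_comm, hvn]
      simp_rw [← Finset.sum_mul, hcol, one_mul, Real.negMulLog, neg_mul, Finset.sum_neg_distrib,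
        neg_neg]
    have e2 : ∑ i, ∑ j, D i j * (l j * Real.log (μ i)) = ∑ i, q i * Real.log (μ i) := by
      simp_rw [hqD, Finset.sum_mul, mul_assoc]
    have e3 : ∑ i, ∑ j, D i j * l j = 1 := by
      rw [Finset.sum_comm]
      simp_rw [← Finset.sum_mul, hcol, one_mul, hl1]
    have e4 : ∑ i, ∑ j, D i j * μ i = 1 := by
      simp_rw [← Finset.sum_mul, hrow, one_mul, hμ1]
    simp only [ht, mul_add, mul_sub, Finset.sum_add_distrib, Finset.sum_sub_distrib, e1, e2, e3, e4]
    ring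
  refine ⟨?_, fun heq => ?_⟩
  · have : 0 ≤ ∑ i, ∑ j, t i j := Finset.sum_nonneg fun i _ => Finset.sum_nonneg fun j _ => htn i j
    change vnEntropy ρ ≤ - ∑ i, q i * Real.log (μ i)
    linarith
  · change vnEntropy ρ = - ∑ i, q i * Real.log (μ i) at heq
    have h0 : ∑ i, ∑ j, t i j = 0 := by rw [hsum, heq]; ring
    have h1 : ∀ i j, t i j = 0 := by
      intro i j
      have := (Finset.sum_eq_zero_iff_of_nonneg
        (fun i _ => Finset.sum_nonneg fun j _ => htn i j)).mp h0 i (mem_univ _)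
      exact (Finset.sum_eq_zero_iff_of_nonneg (fun j _ => htn i j)).mp this j (mem_univ _)
    have h2 : ∀ i j, W i j * (l j : ℂ) = (μ i : ℂ) * W i j := by
      intro i j
      by_cases hw : W i j = 0
      · simp [hw]
      have hDp : D i j ≠ 0 := by simp [hD, hw]
      have : l j = μ i := by
        rcases (hμ i).eq_or_lt with h | h
        · rw [← h]
          exact (mul_eq_zero.mp (hzero i h.symm j)).resolve_left hDp
        · exact (kl_term (hl0 j) h).2 ((mul_eq_zero.mp (h1 i j)).resolve_left hDp)
      rw [this, mul_comm]
    have h3 : W * Matrix.diagonal (fun i => (l i : ℂ)) = Matrix.diagonal (fun i => (μ i : ℂ)) * W := by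
      ext i j
      rw [Matrix.mul_diagonal, Matrix.diagonal_mul, h2]
    rw [hsp, ← hVW, Matrix.mul_assoc V W, h3, Matrix.conjTranspose_mul]
    have : Matrix.diagonal (fun i => (μ i : ℂ)) * W * (W.conjTranspose * V.conjTranspose)
      = Matrix.diagonal (fun i => (μ i : ℂ)) * (W * W.conjTranspose) * V.conjTranspose := by
      simp only [Matrix.mul_assoc]
    rw [Matrix.mul_assoc V, this, hWW, Matrix.mul_one, Matrix.mul_assoc]

end part1

section part2
open Finset

lemma eig_decomp {ι : Type} [Fintype ι] [DecidableEq ι] {ρ : Matrix ι ι ℂ} (hρ : ρ.IsHermitian) :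
    ∃ (V : Matrix ι ι ℂ) (a : ι → ℝ), V.conjTranspose * V = 1 ∧
      ρ = V * Matrix.diagonal (fun i => (a i : ℂ)) * V.conjTranspose := by
  refine ⟨(hρ.eigenvectorUnitary).1, hρ.eigenvalues, ?_, hρ.spectral_theorem⟩
  exact Unitary.coe_star_mul_self hρ.eigenvectorUnitary

open scoped ComplexOrder in
lemma eig_decomp_psd {ι : Type} [Fintype ι] [DecidableEq ι] {ρ : Matrix ι ι ℂ} (hρ : ρ.PosSemidef)
    (htr : ρ.trace = 1) :
    ∃ (V : Matrix ι ι ℂ) (a : ι → ℝ), V.conjTranspose * V = 1 ∧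
      ρ = V * Matrix.diagonal (fun i => (a i : ℂ)) * V.conjTranspose ∧
      (∀ i, 0 ≤ a i) ∧ ∑ i, a i = 1 ∧ V.conjTranspose * ρ * V = Matrix.diagonal (fun i => (a i : ℂ)) ∧
      vnEntropy ρ = ∑ i, Real.negMulLog (a i) := by
  obtain ⟨V, a, hV, h⟩ := eig_decomp hρ.isHermitian
  have hd : V.conjTranspose * ρ * V = Matrix.diagonal (fun i => (a i : ℂ)) := by
    have : V.conjTranspose * ρ * V = (V.conjTranspose * V) * Matrix.diagonal (fun i => (a i : ℂ))
        * (V.conjTranspose * V) := by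
      rw [h]; simp only [Matrix.mul_assoc]
    rw [this, hV, Matrix.one_mul, Matrix.mul_one]
  refine ⟨V, a, hV, h, ?_, ?_, hd, ?_⟩
  · intro i
    have := (hρ.conjTranspose_mul_mul_same V).diag_nonneg (i := i)
    rw [hd, Matrix.diagonal_apply_eq] at this
    exact_mod_cast this
  · have := congrArg Matrix.trace h
    rw [htr, Matrix.mul_assoc, Matrix.trace_mul_comm, Matrix.mul_assoc, hV, Matrix.mul_one,
      Matrix.trace_diagonal] at this
    exact_mod_cast this.symm
  · rw [h]; exact vn_diag V hV a

open scoped Kronecker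

lemma kron_unitary {ι κ : Type} [Fintype ι] [DecidableEq ι] [Fintype κ] [DecidableEq κ]
    {V : Matrix ι ι ℂ} {W : Matrix κ κ ℂ} (hV : V.conjTranspose * V = 1)
    (hW : W.conjTranspose * W = 1) : (V ⊗ₖ W).conjTranspose * (V ⊗ₖ W) = 1 := by
  rw [Matrix.conjTranspose_kronecker, ← Matrix.mul_kronecker_mul, hV, hW, Matrix.one_kronecker_one]

lemma kron_diag {ι κ : Type} [Fintype ι] [DecidableEq ι] [Fintype κ] [DecidableEq κ]
    (V : Matrix ι ι ℂ) (W : Matrix κ κ ℂ) (a : ι → ℝ) (b : κ → ℝ) :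
    (V * Matrix.diagonal (fun i => (a i : ℂ)) * V.conjTranspose) ⊗ₖ
    (W * Matrix.diagonal (fun i => (b i : ℂ)) * W.conjTranspose) =
    (V ⊗ₖ W) * Matrix.diagonal (fun p : ι × κ => ((a p.1 * b p.2 : ℝ) : ℂ)) * (V ⊗ₖ W).conjTranspose := by
  rw [Matrix.conjTranspose_kronecker, Matrix.mul_kronecker_mul, Matrix.mul_kronecker_mul,
    Matrix.diagonal_kronecker_diagonal]
  congr 2
  ext i j
  simp

lemma negMulLog_prod_sum {ι κ : Type} [Fintype ι] [Fintype κ] (a : ι → ℝ) (b : κ → ℝ)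
    (ha : ∑ i, a i = 1) (hb : ∑ i, b i = 1) :
    ∑ p : ι × κ, Real.negMulLog (a p.1 * b p.2) =
      ∑ i, Real.negMulLog (a i) + ∑ i, Real.negMulLog (b i) := by
  rw [Fintype.sum_prod_type]
  simp only [Real.negMulLog_mul, Finset.sum_add_distrib, ← Finset.sum_mul, ← Finset.mul_sum, ha, hb,
    one_mul]

lemma ptrace_diag {ι κ : Type} [Fintype ι] [DecidableEq ι] [Fintype κ] [DecidableEq κ]
    (ρ : Matrix (ι × κ) (ι × κ) ℂ) (V : Matrix ι ι ℂ) (W : Matrix κ κ ℂ)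
    (hW : W.conjTranspose * W = 1) (ρ1 : Matrix ι ι ℂ)
    (h1 : ∀ i i', ρ1 i i' = ∑ k, ρ (i, k) (i', k)) (i : ι) :
    ∑ j, ((V ⊗ₖ W).conjTranspose * ρ * (V ⊗ₖ W)) (i, j) (i, j)
      = (V.conjTranspose * ρ1 * V) i i := by
  have hW' : W * W.conjTranspose = 1 := mul_eq_one_comm.mp hW
  have hd : ∀ l l', ∑ j, star (W l j) * W l' j = if l = l' then 1 else 0 := by
    intro l l'
    have := congrFun (congrFun hW' l') l
    rw [Matrix.mul_apply] at this
    simp only [Matrix.conjTranspose_apply] at this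
    simp_rw [mul_comm (star _)]
    rw [this, Matrix.one_apply]
    simp [eq_comm]
  simp only [Matrix.mul_apply, Matrix.conjTranspose_apply, Matrix.kroneckerMap_apply,
    Fintype.sum_prod_type, Finset.sum_mul, star_mul', h1, Finset.mul_sum]
  calc _ = ∑ x', ∑ l', ∑ x, ∑ l, star (V x i) * ρ (x, l) (x', l') * V x' i *
        ∑ j, star (W l j) * W l' j := by
        rw [Finset.sum_comm]
        refine Finset.sum_congr rfl fun x' _ => ?_
        rw [Finset.sum_comm]
        refine Finset.sum_congr rfl fun l' _ => ?_
        rw [Finset.sum_comm]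
        refine Finset.sum_congr rfl fun x _ => ?_
        rw [Finset.sum_comm]
        refine Finset.sum_congr rfl fun l _ => ?_
        rw [Finset.mul_sum]
        refine Finset.sum_congr rfl fun j _ => ?_
        ring
    _ = _ := by
        refine Finset.sum_congr rfl fun x' _ => ?_
        rw [Finset.sum_comm]
        refine Finset.sum_congr rfl fun x _ => ?_
        refine Finset.sum_congr rfl fun l' _ => ?_
        simp only [hd, mul_ite, mul_one, mul_zero, Finset.sum_ite_eq', Finset.mem_univ, if_true]

lemma ptrace_diag' {ι κ : Type} [Fintype ι] [DecidableEq ι] [Fintype κ] [DecidableEq κ]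
    (ρ : Matrix (ι × κ) (ι × κ) ℂ) (V : Matrix ι ι ℂ) (W : Matrix κ κ ℂ)
    (hV : V.conjTranspose * V = 1) (ρ2 : Matrix κ κ ℂ)
    (h2 : ∀ k k', ρ2 k k' = ∑ i, ρ (i, k) (i, k')) (j : κ) :
    ∑ i, ((V ⊗ₖ W).conjTranspose * ρ * (V ⊗ₖ W)) (i, j) (i, j)
      = (W.conjTranspose * ρ2 * W) j j := by
  rw [← ptrace_diag (ρ.submatrix Prod.swap Prod.swap) W V hV ρ2 h2 j]
  refine Finset.sum_congr rfl fun i _ => ?_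
  simp only [Matrix.mul_apply, Matrix.conjTranspose_apply, Matrix.kroneckerMap_apply,
    Fintype.sum_prod_type, Matrix.submatrix_apply, Prod.swap]
  rw [Finset.sum_comm]
  refine Finset.sum_congr rfl fun x _ => Finset.sum_congr rfl fun y _ => ?_
  rw [Finset.sum_comm, mul_comm (V _ _)]
  congr 1
  refine Finset.sum_congr rfl fun x _ => Finset.sum_congr rfl fun y _ => ?_
  rw [mul_comm (V _ _)]

open scoped ComplexOrder in
lemma vn_kron {ι κ : Type} [Fintype ι] [DecidableEq ι] [Fintype κ] [DecidableEq κ]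
    {ρ1 : Matrix ι ι ℂ} {ρ2 : Matrix κ κ ℂ}
    (p1 : ρ1.PosSemidef) (p2 : ρ2.PosSemidef) (t1 : ρ1.trace = 1) (t2 : ρ2.trace = 1) :
    vnEntropy (ρ1 ⊗ₖ ρ2) = vnEntropy ρ1 + vnEntropy ρ2 := by
  obtain ⟨V, a, hV, e1, a0, a1, d1, v1⟩ := eig_decomp_psd p1 t1
  obtain ⟨W, b, hW, e2, b0, b1, d2, v2⟩ := eig_decomp_psd p2 t2
  rw [v1, v2, ← negMulLog_prod_sum a b a1 b1, e1, e2, kron_diag, vn_diag _ (kron_unitary hV hW)]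

open scoped ComplexOrder in
lemma vn_sub {ι κ : Type} [Fintype ι] [DecidableEq ι] [Fintype κ] [DecidableEq κ]
    {ρ : Matrix (ι × κ) (ι × κ) ℂ} {ρ1 : Matrix ι ι ℂ} {ρ2 : Matrix κ κ ℂ}
    (p : ρ.PosSemidef) (t : ρ.trace = 1)
    (p1 : ρ1.PosSemidef) (p2 : ρ2.PosSemidef) (t1 : ρ1.trace = 1) (t2 : ρ2.trace = 1)
    (h1 : ∀ i i', ρ1 i i' = ∑ k, ρ (i, k) (i', k))
    (h2 : ∀ k k', ρ2 k k' = ∑ i, ρ (i, k) (i, k')) :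
    vnEntropy ρ ≤ vnEntropy ρ1 + vnEntropy ρ2 ∧
    (vnEntropy ρ = vnEntropy ρ1 + vnEntropy ρ2 → ρ = ρ1 ⊗ₖ ρ2) := by
  obtain ⟨V, a, hV, e1, a0, a1, d1, v1⟩ := eig_decomp_psd p1 t1
  obtain ⟨W, b, hW, e2, b0, b1, d2, v2⟩ := eig_decomp_psd p2 t2
  set Z := (V ⊗ₖ W).conjTranspose * ρ * (V ⊗ₖ W) with hZ
  set q : ι × κ → ℝ := fun s => (Z s s).re with hq
  have q0 : ∀ s, 0 ≤ q s := by
    intro s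
    have := (p.conjTranspose_mul_mul_same (V ⊗ₖ W)).diag_nonneg (i := s)
    exact (Complex.nonneg_iff.mp this).1
  have qa : ∀ i, ∑ j, q (i, j) = a i := by
    intro i
    have := ptrace_diag ρ V W hW ρ1 h1 i
    rw [d1, Matrix.diagonal_apply_eq] at this
    have := congrArg Complex.re this
    simpa using this
  have qb : ∀ j, ∑ i, q (i, j) = b j := by
    intro i
    have := ptrace_diag' ρ V W hV ρ2 h2 i
    rw [d2, Matrix.diagonal_apply_eq] at this
    have := congrArg Complex.re this
    simpa using this
  have za : ∀ s : ι × κ, a s.1 = 0 → q s = 0 := by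
    intro s hs
    have := qa s.1
    rw [hs] at this
    exact (Finset.sum_eq_zero_iff_of_nonneg (fun j _ => q0 (s.1, j))).mp this s.2 (mem_univ _)
  have zb : ∀ s : ι × κ, b s.2 = 0 → q s = 0 := by
    intro s hs
    have := qb s.2
    rw [hs] at this
    exact (Finset.sum_eq_zero_iff_of_nonneg (fun j _ => q0 (j, s.2))).mp this s.1 (mem_univ _)
  have K := klein p t (V ⊗ₖ W) (kron_unitary hV hW) (fun s => a s.1 * b s.2)
    (fun s => mul_nonneg (a0 _) (b0 _))
    (by rw [Fintype.sum_prod_type]; simp only [← Finset.mul_sum, b1, mul_one, a1])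
    (by
      intro s hs
      rcases mul_eq_zero.mp hs with h | h
      · exact za s h
      · exact zb s h)
  have hS : - ∑ s, q s * Real.log (a s.1 * b s.2) = vnEntropy ρ1 + vnEntropy ρ2 := by
    have : ∀ s, q s * Real.log (a s.1 * b s.2) = q s * Real.log (a s.1) + q s * Real.log (b s.2) := by
      intro s
      by_cases h : q s = 0
      · simp [h]
      · rw [Real.log_mul (fun h' => h (za s h')) (fun h' => h (zb s h')), mul_add]
    simp only [this, Finset.sum_add_distrib]
    have e3 : ∑ s : ι × κ, q s * Real.log (a s.1) = ∑ i, a i * Real.log (a i) := by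
      rw [Fintype.sum_prod_type]
      simp only [← Finset.sum_mul, qa]
    have e4 : ∑ s : ι × κ, q s * Real.log (b s.2) = ∑ i, b i * Real.log (b i) := by
      rw [Fintype.sum_prod_type_right]
      simp only [← Finset.sum_mul, qb]
    rw [e3, e4, v1, v2]
    simp only [Real.negMulLog, neg_mul, Finset.sum_neg_distrib]
    ring
  rw [← hS]
  refine ⟨K.1, fun h => ?_⟩
  rw [K.2 h, e1, e2, kron_diag]

open scoped ComplexOrder in
lemma vn_max {ι : Type} [Fintype ι] [DecidableEq ι] [Nonempty ι]
    {ρ : Matrix ι ι ℂ} (p : ρ.PosSemidef) (t : ρ.trace = 1) :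
    vnEntropy ρ ≤ Real.log (Fintype.card ι) ∧
    (vnEntropy ρ = Real.log (Fintype.card ι) →
      ρ = Matrix.diagonal (fun _ => ((Fintype.card ι : ℂ)⁻¹))) := by
  have hc : (Fintype.card ι : ℝ) ≠ 0 := by exact_mod_cast Fintype.card_ne_zero
  have K := klein p t 1 (by simp) (fun _ => (Fintype.card ι : ℝ)⁻¹) (fun _ => by positivity)
    (by simp) (fun i h => absurd h (inv_ne_zero hc))
  have hS : - ∑ i, ((Matrix.conjTranspose (1 : Matrix ι ι ℂ) * ρ * (1 : Matrix ι ι ℂ) : Matrix ι ι ℂ) i i).re * Real.log ((Fintype.card ι : ℝ)⁻¹)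
      = Real.log (Fintype.card ι) := by
    rw [← Finset.sum_mul, Real.log_inv]
    have : ∑ i, ((Matrix.conjTranspose (1 : Matrix ι ι ℂ) * ρ * (1 : Matrix ι ι ℂ) : Matrix ι ι ℂ) i i).re = 1 := by
      have := congrArg Complex.re t
      simpa [Matrix.trace] using this
    rw [this]; ring
  rw [hS] at K
  refine ⟨K.1, fun h => ?_⟩
  rw [K.2 h]
  simp

end part2

section part3
open Finset
open scoped Kronecker

noncomputable def rr {m : ℕ} (ψ : (Fin m → Fin 2) → ℂ) (A : Finset (Fin m)) (x y : Fin m → Fin 2) : ℂ :=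
  ∑ w : Fin m → Fin 2, ψ (A.piecewise x w) * (starRingEnd ℂ) (ψ (A.piecewise y w))

def res {m : ℕ} (A : Finset (Fin m)) (x : Fin m → Fin 2) : {x // x ∈ A} → Fin 2 := fun i => x i

lemma res_surj {m : ℕ} (A : Finset (Fin m)) (u : {x // x ∈ A} → Fin 2) : ∃ x, res A x = u := by
  refine ⟨fun i => if h : i ∈ A then u ⟨i, h⟩ else 0, ?_⟩
  ext i
  simp [res]

def swapE {m : ℕ} (A : Finset (Fin m)) :
    (Fin m → Fin 2) × (Fin m → Fin 2) ≃ (Fin m → Fin 2) × (Fin m → Fin 2) where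
  toFun p := (A.piecewise p.1 p.2, A.piecewise p.2 p.1)
  invFun p := (A.piecewise p.1 p.2, A.piecewise p.2 p.1)
  left_inv p := by
    ext i <;> by_cases h : i ∈ A <;> simp [Finset.piecewise, h]
  right_inv p := by
    ext i <;> by_cases h : i ∈ A <;> simp [Finset.piecewise, h]

lemma sum_pw {m : ℕ} (A : Finset (Fin m)) (F : (Fin m → Fin 2) → (Fin m → Fin 2) → ℂ) :
    ∑ t, ∑ w, F (A.piecewise t w) (A.piecewise w t) = ∑ t, ∑ w, F t w := by
  rw [← Fintype.sum_prod_type', ← Fintype.sum_prod_type']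
  exact Equiv.sum_comp (swapE A) (fun p => F p.1 p.2)

lemma sum_pw1 {m : ℕ} (A : Finset (Fin m)) (G : (Fin m → Fin 2) → ℂ) :
    ∑ t, ∑ w, G (A.piecewise t w) = 2 ^ m * ∑ s, G s := by
  rw [sum_pw A (fun t _ => G t)]
  simp [Finset.mul_sum]

def glueE {m : ℕ} (A : Finset (Fin m)) :
    ({x // x ∈ A} → Fin 2) × ({x // x ∈ Aᶜ} → Fin 2) ≃ (Fin m → Fin 2) where
  toFun p := glue A p.1 p.2
  invFun x := (res A x, res Aᶜ x)
  left_inv p := by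
    ext i
    · simp [glue, res]
    · have := i.2
      rw [mem_compl] at this
      simp [glue, res, this]
  right_inv x := by
    ext i
    by_cases h : i ∈ A <;> simp [glue, res, h]

lemma card_fun {m : ℕ} (A : Finset (Fin m)) : Fintype.card ({x // x ∈ A} → Fin 2) = 2 ^ A.card := by
  simp

lemma sum_res {m : ℕ} (A : Finset (Fin m)) (F : ({x // x ∈ A} → Fin 2) → ℂ) :
    2 ^ A.card * ∑ x, F (res A x) = 2 ^ m * ∑ u, F u := by
  rw [← Equiv.sum_comp (glueE A), Fintype.sum_prod_type]
  have : ∀ u w, res A (glueE A (u, w)) = u := fun u w =>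
    congrArg Prod.fst ((glueE A).left_inv (u, w))
  simp only [this, Finset.sum_const, Finset.card_univ, nsmul_eq_mul, ← Finset.mul_sum]
  rw [card_fun, ← mul_assoc]
  congr 1
  push_cast
  rw [← pow_add, Finset.card_add_card_compl, Fintype.card_fin]

lemma rr_eq {m : ℕ} (ψ : (Fin m → Fin 2) → ℂ) (A : Finset (Fin m)) (x y : Fin m → Fin 2) :
    rr ψ A x y = 2 ^ A.card * reducedDensity ψ A (res A x) (res A y) := by
  unfold rr reducedDensity
  rw [← Equiv.sum_comp (glueE A), Fintype.sum_prod_type]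
  have : ∀ x u w, A.piecewise x (glueE A (u, w)) = glue A (res A x) w := by
    intro x u w
    ext i
    by_cases h : i ∈ A <;> simp [glue, glueE, res, h]
  simp only [this, Finset.sum_const, Finset.card_univ, nsmul_eq_mul]
  rw [card_fun]
  push_cast
  rfl

lemma rd_eq {m : ℕ} (ψ : (Fin m → Fin 2) → ℂ) (A : Finset (Fin m)) (x y : Fin m → Fin 2) :
    reducedDensity ψ A (res A x) (res A y) = (2 ^ A.card)⁻¹ * rr ψ A x y := by
  rw [rr_eq, ← mul_assoc, inv_mul_cancel₀ (pow_ne_zero _ two_ne_zero), one_mul]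

lemma rr_congr {m : ℕ} (ψ : (Fin m → Fin 2) → ℂ) (A : Finset (Fin m)) {x y x' y' : Fin m → Fin 2}
    (hx : ∀ i ∈ A, x i = x' i) (hy : ∀ i ∈ A, y i = y' i) : rr ψ A x y = rr ψ A x' y' := by
  unfold rr
  refine Finset.sum_congr rfl fun w _ => ?_
  rw [Finset.piecewise_congr A hx (fun _ _ => rfl), Finset.piecewise_congr A hy (fun _ _ => rfl)]

lemma rr_ptrace {m : ℕ} (ψ : (Fin m → Fin 2) → ℂ) {A' A : Finset (Fin m)} (h : A' ⊆ A)
    (x y : Fin m → Fin 2) :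
    ∑ t, rr ψ A (A'.piecewise x t) (A'.piecewise y t) = 2 ^ m * rr ψ A' x y := by
  unfold rr
  rw [← sum_pw1 A]
  refine Finset.sum_congr rfl fun t _ => Finset.sum_congr rfl fun w _ => ?_
  have : ∀ x, A.piecewise (A'.piecewise x t) w = A'.piecewise x (A.piecewise t w) := by
    intro x
    ext i
    by_cases h1 : i ∈ A'
    · simp [h1, h h1]
    · by_cases h2 : i ∈ A <;> simp [h1, h2]
  simp only [this]

lemma rd_mul {m : ℕ} (ψ : (Fin m → Fin 2) → ℂ) (A : Finset (Fin m)) :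
    reducedDensity ψ A = (Matrix.of fun u w => ψ (glue A u w)) *
      (Matrix.of fun u w => ψ (glue A u w)).conjTranspose := by
  ext u v
  simp [reducedDensity, Matrix.mul_apply]

open scoped ComplexOrder in
lemma rd_psd {m : ℕ} (ψ : (Fin m → Fin 2) → ℂ) (A : Finset (Fin m)) :
    (reducedDensity ψ A).PosSemidef := by
  rw [rd_mul]
  exact Matrix.posSemidef_self_mul_conjTranspose _

open scoped ComplexOrder in
lemma rd_herm {m : ℕ} (ψ : (Fin m → Fin 2) → ℂ) (A : Finset (Fin m)) :
    (reducedDensity ψ A).IsHermitian := (rd_psd ψ A).isHermitian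

lemma rd_trace {m : ℕ} {ψ : (Fin m → Fin 2) → ℂ} (hψ : ∑ x, ‖ψ x‖ ^ 2 = 1) (A : Finset (Fin m)) :
    (reducedDensity ψ A).trace = 1 := by
  unfold Matrix.trace reducedDensity Matrix.diag
  rw [← Fintype.sum_prod_type']
  have := Equiv.sum_comp (glueE A) (fun x => ψ x * (starRingEnd ℂ) (ψ x))
  simp only [Complex.mul_conj'] at this ⊢
  refine this.trans ?_
  exact_mod_cast hψ

lemma sent_compl {m : ℕ} (ψ : (Fin m → Fin 2) → ℂ) (A : Finset (Fin m)) :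
    Sent ψ Aᶜ = Sent ψ A := by
  unfold Sent
  set M : Matrix ({x // x ∈ A} → Fin 2) ({x // x ∈ Aᶜ} → Fin 2) ℂ :=
    Matrix.of fun u w => ψ (glue A u w) with hM
  have h2 : reducedDensity ψ Aᶜ = (M.conjTranspose * M).transpose := by
    ext w w'
    rw [Matrix.transpose_apply, Matrix.mul_apply]
    unfold reducedDensity
    have hA : ∀ i, i ∈ A ↔ i ∈ Aᶜᶜ := by simp
    refine Fintype.sum_equiv (Equiv.arrowCongr (Equiv.subtypeEquivRight fun i => (hA i).symm)
      (Equiv.refl _)) _ _ fun u => ?_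
    have : ∀ w, glue Aᶜ w u = glue A ((Equiv.arrowCongr (Equiv.subtypeEquivRight
        fun i => (hA i).symm) (Equiv.refl _)) u) w := by
      intro w
      ext i
      by_cases h : i ∈ A <;> simp [glue, h] <;> rfl
    rw [this w, this w', Matrix.conjTranspose_apply, mul_comm]
    rfl
  rw [h2, vn_transpose (Matrix.isHermitian_conjTranspose_mul_self M), ← vn_mul_comm, rd_mul]

def pairE {m : ℕ} (X Y : Finset (Fin m)) (h : Disjoint X Y) :
    ({x // x ∈ X} → Fin 2) × ({x // x ∈ Y} → Fin 2) ≃ ({x // x ∈ X ∪ Y} → Fin 2) where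
  toFun p := fun i => if hx : i.1 ∈ X then p.1 ⟨i.1, hx⟩ else
    p.2 ⟨i.1, (Finset.mem_union.mp i.2).resolve_left hx⟩
  invFun z := (fun i => z ⟨i.1, Finset.mem_union_left _ i.2⟩,
    fun i => z ⟨i.1, Finset.mem_union_right _ i.2⟩)
  left_inv p := by
    ext i
    · simp
    · have : i.1 ∉ X := fun hx => Finset.disjoint_left.mp h hx i.2
      simp [this]
  right_inv z := by
    ext i
    simp

lemma pairE_res {m : ℕ} (X Y : Finset (Fin m)) (h : Disjoint X Y) (x t : Fin m → Fin 2) :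
    pairE X Y h (res X x, res Y t) = res (X ∪ Y) (X.piecewise x t) := by
  ext i
  by_cases hx : i.1 ∈ X <;> simp [pairE, res, hx]

lemma pairE_res' {m : ℕ} (X Y : Finset (Fin m)) (h : Disjoint X Y) (x : Fin m → Fin 2) :
    pairE X Y h (res X x, res Y x) = res (X ∪ Y) x := by
  rw [pairE_res, Finset.piecewise_same]

lemma res_pw {m : ℕ} (Y X : Finset (Fin m)) (h : Disjoint X Y) (x t : Fin m → Fin 2) :
    res X (Y.piecewise t x) = res X x := by
  ext i
  have : i.1 ∉ Y := fun hx => Finset.disjoint_left.mp h i.2 hx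
  simp [res, this]

lemma pt1 {m : ℕ} (ψ : (Fin m → Fin 2) → ℂ) (X Y : Finset (Fin m)) (h : Disjoint X Y) (u u') :
    reducedDensity ψ X u u' = ∑ k, (reducedDensity ψ (X ∪ Y)).submatrix (pairE X Y h) (pairE X Y h)
      (u, k) (u', k) := by
  obtain ⟨x, rfl⟩ := res_surj X u
  obtain ⟨y, rfl⟩ := res_surj X u'
  have h2 : (2 : ℂ) ^ m ≠ 0 := pow_ne_zero _ two_ne_zero
  apply mul_left_cancel₀ h2
  rw [← sum_res Y]
  simp only [Matrix.submatrix_apply, pairE_res, rd_eq]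
  rw [← Finset.mul_sum, rr_ptrace ψ Finset.subset_union_left, Finset.card_union_of_disjoint h, pow_add]
  field_simp

lemma pt2 {m : ℕ} (ψ : (Fin m → Fin 2) → ℂ) (X Y : Finset (Fin m)) (h : Disjoint X Y) (u u') :
    reducedDensity ψ Y u u' = ∑ k, (reducedDensity ψ (X ∪ Y)).submatrix (pairE X Y h) (pairE X Y h)
      (k, u) (k, u') := by
  obtain ⟨x, rfl⟩ := res_surj Y u
  obtain ⟨y, rfl⟩ := res_surj Y u'
  have h2 : (2 : ℂ) ^ m ≠ 0 := pow_ne_zero _ two_ne_zero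
  apply mul_left_cancel₀ h2
  rw [← sum_res X]
  have : ∀ x t, pairE X Y h (res X t, res Y x) = res (X ∪ Y) (Y.piecewise x t) := by
    intro x t
    rw [← pairE_res' X Y h, res_pw Y X h]
    congr 2
    ext i
    simp [res]
  simp only [Matrix.submatrix_apply, this, rd_eq]
  rw [← Finset.mul_sum, rr_ptrace ψ Finset.subset_union_right, Finset.card_union_of_disjoint h, pow_add]
  field_simp

open scoped ComplexOrder in
lemma sent_sub {m : ℕ} {ψ : (Fin m → Fin 2) → ℂ} (hψ : ∑ x, ‖ψ x‖ ^ 2 = 1) {X Y : Finset (Fin m)}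
    (h : Disjoint X Y) :
    Sent ψ (X ∪ Y) ≤ Sent ψ X + Sent ψ Y ∧
    (Sent ψ (X ∪ Y) = Sent ψ X + Sent ψ Y → ∀ x y, rr ψ (X ∪ Y) x y = rr ψ X x y * rr ψ Y x y) := by
  unfold Sent
  rw [← vn_reindex (rd_herm ψ (X ∪ Y)) (pairE X Y h)]
  have K := vn_sub ((rd_psd ψ (X ∪ Y)).submatrix (pairE X Y h))
    (by
      rw [← rd_trace hψ (X ∪ Y)]
      exact Equiv.sum_comp (pairE X Y h) (fun u => reducedDensity ψ (X ∪ Y) u u))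
    (rd_psd ψ X) (rd_psd ψ Y) (rd_trace hψ X) (rd_trace hψ Y) (pt1 ψ X Y h) (pt2 ψ X Y h)
  refine ⟨K.1, fun e x y => ?_⟩
  have := congrFun (congrFun (K.2 e) (res X x, res Y x)) (res X y, res Y y)
  rw [Matrix.submatrix_apply, pairE_res', pairE_res', Matrix.kroneckerMap_apply] at this
  rw [rr_eq, rr_eq, rr_eq, this, Finset.card_union_of_disjoint h, pow_add]
  ring

open scoped ComplexOrder in
lemma sent_prod {m : ℕ} {ψ : (Fin m → Fin 2) → ℂ} (hψ : ∑ x, ‖ψ x‖ ^ 2 = 1) {X Y : Finset (Fin m)}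
    (h : Disjoint X Y) (hp : ∀ x y, rr ψ (X ∪ Y) x y = rr ψ X x y * rr ψ Y x y) :
    Sent ψ (X ∪ Y) = Sent ψ X + Sent ψ Y := by
  unfold Sent
  rw [← vn_reindex (rd_herm ψ (X ∪ Y)) (pairE X Y h),
    ← vn_kron (rd_psd ψ X) (rd_psd ψ Y) (rd_trace hψ X) (rd_trace hψ Y)]
  congr 1
  ext ⟨u, v⟩ ⟨u', v'⟩
  obtain ⟨z, hz⟩ := res_surj (X ∪ Y) (pairE X Y h (u, v))
  obtain ⟨z', hz'⟩ := res_surj (X ∪ Y) (pairE X Y h (u', v'))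
  rw [Matrix.submatrix_apply, Matrix.kroneckerMap_apply, ← hz, ← hz', rd_eq, hp, rr_eq, rr_eq]
  rw [← pairE_res' X Y h] at hz hz'
  have e1 := (pairE X Y h).injective hz
  have e2 := (pairE X Y h).injective hz'
  rw [Prod.mk.injEq] at e1 e2
  rw [e1.1, e1.2, e2.1, e2.2, Finset.card_union_of_disjoint h, pow_add]
  field_simp

lemma sent_mon {m : ℕ} {ψ : (Fin m → Fin 2) → ℂ} (hψ : ∑ x, ‖ψ x‖ ^ 2 = 1)
    {X Y Y' : Finset (Fin m)} (h : Disjoint X Y) (hY : Y' ⊆ Y)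
    (he : Sent ψ (X ∪ Y) = Sent ψ X + Sent ψ Y) :
    Sent ψ (X ∪ Y') = Sent ψ X + Sent ψ Y' := by
  have hp := (sent_sub hψ h).2 he
  refine sent_prod hψ (h.mono_right hY) fun x y => ?_
  have h2 : (2 : ℂ) ^ m ≠ 0 := pow_ne_zero _ two_ne_zero
  apply mul_left_cancel₀ h2
  rw [← rr_ptrace ψ (Finset.union_subset_union_right hY : X ∪ Y' ⊆ X ∪ Y)]
  simp only [hp]
  have e1 : ∀ t, rr ψ X ((X ∪ Y').piecewise x t) ((X ∪ Y').piecewise y t) = rr ψ X x y := by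
    intro t
    apply rr_congr <;> intro i hi <;> simp [hi]
  have e2 : ∀ t, rr ψ Y ((X ∪ Y').piecewise x t) ((X ∪ Y').piecewise y t)
      = rr ψ Y (Y'.piecewise x t) (Y'.piecewise y t) := by
    intro t
    have : ∀ i ∈ Y, i ∉ X := fun i hi hx => Finset.disjoint_left.mp h hx hi
    apply rr_congr <;> intro i hi <;> by_cases h' : i ∈ Y' <;> simp [h', this i hi]
  simp only [e1, e2, ← Finset.mul_sum, rr_ptrace ψ hY]
  ring

open scoped ComplexOrder in
lemma sent_max {m : ℕ} {ψ : (Fin m → Fin 2) → ℂ} (hψ : ∑ x, ‖ψ x‖ ^ 2 = 1) (X : Finset (Fin m)) :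
    Sent ψ X ≤ X.card * Real.log 2 ∧
    (Sent ψ X = X.card * Real.log 2 →
      ∀ x y, rr ψ X x y = if res X x = res X y then 1 else 0) := by
  have K := vn_max (rd_psd ψ X) (rd_trace hψ X)
  rw [card_fun] at K
  push_cast at K
  rw [Real.log_pow] at K
  refine ⟨K.1, fun e x y => ?_⟩
  rw [rr_eq, K.2 e, Matrix.diagonal_apply]
  split_ifs
  · field_simp
  · simp

end part3

section part4
open Finset

noncomputable def QQ {m : ℕ} (ψ : (Fin m → Fin 2) → ℂ) (X : Finset (Fin m)) : ℂ :=
  ∑ x, ∑ y, ψ x * ψ y * (starRingEnd ℂ) (ψ (X.piecewise y x) * ψ (X.piecewise x y))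

lemma QQ_rr {m : ℕ} (ψ : (Fin m → Fin 2) → ℂ) (X : Finset (Fin m)) :
    ∑ x, ∑ y, rr ψ X x y * rr ψ X y x = 2 ^ m * (2 ^ m * QQ ψ X) := by
  set H : (Fin m → Fin 2) → (Fin m → Fin 2) → ℂ := fun s t =>
    ψ s * ψ t * (starRingEnd ℂ) (ψ (X.piecewise t s) * ψ (X.piecewise s t)) with hH
  have e1 : 2 ^ m * (2 ^ m * QQ ψ X) = ∑ x, ∑ w, ∑ y, ∑ w', H (X.piecewise x w) (X.piecewise y w') := by
    rw [sum_pw1 X (fun s => ∑ y, ∑ w', H s (X.piecewise y w'))]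
    have e0 : ∀ s, ∑ y, ∑ w', H s (X.piecewise y w') = 2 ^ m * ∑ t, H s t := fun s => sum_pw1 X (H s)
    simp only [e0, ← Finset.mul_sum]
    rfl
  rw [e1]
  refine Finset.sum_congr rfl fun x _ => ?_
  rw [Finset.sum_comm]
  refine Finset.sum_congr rfl fun y _ => ?_
  unfold rr
  rw [Finset.sum_mul_sum]
  refine Finset.sum_congr rfl fun w _ => Finset.sum_congr rfl fun w' _ => ?_
  have a1 : X.piecewise (X.piecewise y w') (X.piecewise x w) = X.piecewise y w := by
    ext i; by_cases h : i ∈ X <;> simp [h]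
  have a2 : X.piecewise (X.piecewise x w) (X.piecewise y w') = X.piecewise x w' := by
    ext i; by_cases h : i ∈ X <;> simp [h]
  simp only [hH, a1, a2, map_mul]
  ring

lemma QQ_max {m : ℕ} (ψ : (Fin m → Fin 2) → ℂ) (X : Finset (Fin m))
    (h : ∀ x y, rr ψ X x y = if res X x = res X y then 1 else 0) : QQ ψ X = (2 ^ X.card)⁻¹ := by
  have e := QQ_rr ψ X
  have e2 : ∀ x, ∑ y, rr ψ X x y * rr ψ X y x = 2 ^ m * (2 ^ X.card)⁻¹ := by
    intro x
    have h3 := sum_res X (fun u => if res X x = u then (1 : ℂ) else 0)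
    have : ∀ y, rr ψ X x y * rr ψ X y x = if res X x = res X y then 1 else 0 := by
      intro y
      rw [h, h]
      by_cases hh : res X x = res X y
      · simp [hh]
      · simp [hh]
    simp only [this]
    simp only [Finset.sum_ite_eq, Finset.mem_univ, if_true, mul_one] at h3
    rw [← h3]
    field_simp
  simp only [e2, Finset.sum_const, Finset.card_univ, nsmul_eq_mul] at e
  have hc : ((Fintype.card (Fin m → Fin 2) : ℕ) : ℂ) = 2 ^ m := by simp
  rw [hc] at e
  have h2 : (2 : ℂ) ^ m ≠ 0 := pow_ne_zero _ two_ne_zero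
  exact (mul_left_cancel₀ h2 (mul_left_cancel₀ h2 e)).symm

lemma QQ_compl {m : ℕ} (ψ : (Fin m → Fin 2) → ℂ) (X : Finset (Fin m)) : QQ ψ Xᶜ = QQ ψ X := by
  unfold QQ
  refine Finset.sum_congr rfl fun x _ => Finset.sum_congr rfl fun y _ => ?_
  rw [Finset.piecewise_compl, Finset.piecewise_compl, mul_comm (ψ (X.piecewise x y))]

def sig {m : ℕ} (X : Finset (Fin m)) :
    (Fin m → Fin 2) × (Fin m → Fin 2) ≃ (Fin m → Fin 2) × (Fin m → Fin 2) where
  toFun p := (X.piecewise p.2 p.1, X.piecewise p.1 p.2)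
  invFun p := (X.piecewise p.2 p.1, X.piecewise p.1 p.2)
  left_inv p := by
    ext i <;> by_cases h : i ∈ X <;> simp [h]
  right_inv p := by
    ext i <;> by_cases h : i ∈ X <;> simp [h]

lemma sig_sig {m : ℕ} (X Y : Finset (Fin m)) (p) : sig Y (sig X p) = sig (symmDiff X Y) p := by
  ext i <;> by_cases h : i ∈ X <;> by_cases h' : i ∈ Y <;>
    simp [sig, h, h', Finset.piecewise, Finset.mem_symmDiff]

lemma eps_symmDiff {m : ℕ} (X Y : Finset (Fin m)) :
    (-1 : ℂ) ^ (symmDiff X Y).card = (-1) ^ X.card * (-1) ^ Y.card := by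
  have h1 : (symmDiff X Y).card = (X \ Y).card + (Y \ X).card := by
    rw [symmDiff_def, Finset.sup_eq_union, Finset.card_union_of_disjoint disjoint_sdiff_sdiff]
  have h2 := Finset.card_sdiff_add_card_inter X Y
  have h3 := Finset.card_sdiff_add_card_inter Y X
  rw [Finset.inter_comm Y X] at h3
  rw [h1, ← h2, ← h3, ← pow_add]
  have : (X \ Y).card + (X ∩ Y).card + ((Y \ X).card + (X ∩ Y).card)
    = (X \ Y).card + (Y \ X).card + 2 * (X ∩ Y).card := by ring
  rw [this, pow_add _ _ (2 * _), pow_mul]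
  simp

lemma shadow {m : ℕ} (ψ : (Fin m → Fin 2) → ℂ) :
    0 ≤ (∑ X : Finset (Fin m), (-1 : ℂ) ^ X.card * QQ ψ X).re := by
  set F : (Fin m → Fin 2) × (Fin m → Fin 2) → ℂ := fun p => ψ p.1 * ψ p.2 with hF
  set G : (Fin m → Fin 2) × (Fin m → Fin 2) → ℂ :=
    fun p => ∑ X : Finset (Fin m), (-1 : ℂ) ^ X.card * F (sig X p) with hG
  have hQ : ∀ X, QQ ψ X = ∑ p, F p * (starRingEnd ℂ) (F (sig X p)) := by
    intro X
    rw [Fintype.sum_prod_type]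
    rfl
  have key : ∑ p, G p * (starRingEnd ℂ) (G p) =
      2 ^ m * ∑ X : Finset (Fin m), (-1 : ℂ) ^ X.card * QQ ψ X := by
    have h1 : ∀ X Y : Finset (Fin m), ∑ p, F (sig X p) * (starRingEnd ℂ) (F (sig Y p))
        = QQ ψ (symmDiff X Y) := by
      intro X Y
      rw [hQ, ← Equiv.sum_comp (sig X) (fun p => F p * (starRingEnd ℂ) (F (sig (symmDiff X Y) p)))]
      refine Finset.sum_congr rfl fun p _ => ?_
      rw [sig_sig, symmDiff_symmDiff_cancel_left]
    have h2 : ∀ X : Finset (Fin m), ∑ Y : Finset (Fin m),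
        ((-1 : ℂ) ^ X.card * (-1) ^ Y.card) * QQ ψ (symmDiff X Y) =
        ∑ X : Finset (Fin m), (-1 : ℂ) ^ X.card * QQ ψ X := by
      intro X
      simp only [← eps_symmDiff]
      exact Equiv.sum_comp (Function.Involutive.toPerm (symmDiff X) (symmDiff_symmDiff_cancel_left X))
        (fun Z => (-1 : ℂ) ^ Z.card * QQ ψ Z)
    calc ∑ p, G p * (starRingEnd ℂ) (G p)
        = ∑ p, ∑ X : Finset (Fin m), ∑ Y : Finset (Fin m), ((-1 : ℂ) ^ X.card * (-1) ^ Y.card) *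
          (F (sig X p) * (starRingEnd ℂ) (F (sig Y p))) := by
          refine Finset.sum_congr rfl fun p _ => ?_
          simp only [hG, map_sum, Finset.sum_mul_sum, map_mul, map_pow, map_neg, map_one]
          refine Finset.sum_congr rfl fun X _ => Finset.sum_congr rfl fun Y _ => ?_
          ring
      _ = ∑ X : Finset (Fin m), ∑ Y : Finset (Fin m), ((-1 : ℂ) ^ X.card * (-1) ^ Y.card) *
          QQ ψ (symmDiff X Y) := by
          rw [Finset.sum_comm]
          refine Finset.sum_congr rfl fun X _ => ?_
          rw [Finset.sum_comm]
          refine Finset.sum_congr rfl fun Y _ => ?_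
          rw [← Finset.mul_sum, h1]
      _ = _ := by
          simp only [h2]
          simp
  have h3 : ∑ p, G p * (starRingEnd ℂ) (G p) = ((∑ p, ‖G p‖ ^ 2 : ℝ) : ℂ) := by
    push_cast
    exact Finset.sum_congr rfl fun p _ => Complex.mul_conj' _
  rw [h3] at key
  have h4 := congrArg Complex.re key
  rw [Complex.ofReal_re] at h4
  have h5 : (2 : ℂ) ^ m = ((2 ^ m : ℝ) : ℂ) := by push_cast; rfl
  rw [h5, Complex.re_ofReal_mul] at h4
  have h6 : 0 ≤ ∑ p, ‖G p‖ ^ 2 := Finset.sum_nonneg fun _ _ => by positivity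
  rw [h4] at h6
  exact nonneg_of_mul_nonneg_right h6 (by positivity)

lemma no_ame {m k : ℕ} (hm : m = 4 ∧ k = 2 ∨ m = 8 ∧ k = 4) {ψ : (Fin m → Fin 2) → ℂ}
    (hψ : ∑ x, ‖ψ x‖ ^ 2 = 1)
    (h : ∀ X : Finset (Fin m), X.card = k → Sent ψ X = k * Real.log 2) : False := by
  have hk : m = k + k := by omega
  have h1 : ∀ X : Finset (Fin m), X.card ≤ k → Sent ψ X = X.card * Real.log 2 := by
    intro X hX
    obtain ⟨Z, hXZ, hZ⟩ := Finset.exists_superset_card_eq hX (by simp; omega)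
    have a1 := h Z hZ
    have a2 := (sent_sub hψ (disjoint_sdiff (s := X) (t := Z))).1
    rw [Finset.union_sdiff_of_subset hXZ, a1] at a2
    have a3 := (sent_max hψ (Z \ X)).1
    have a4 := (sent_max hψ X).1
    have a5 := Finset.card_sdiff_add_card_eq_card hXZ
    rw [hZ] at a5
    have a6 : ((Z \ X).card : ℝ) + X.card = k := by exact_mod_cast a5
    rw [← a6] at a2
    linarith
  have h2 : ∀ X : Finset (Fin m), X.card ≤ k → QQ ψ X = (2 ^ X.card)⁻¹ := fun X hX =>
    QQ_max ψ X ((sent_max hψ X).2 (h1 X hX))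
  have h3 : ∀ X : Finset (Fin m), QQ ψ X = (2 ^ (min X.card (m - X.card)))⁻¹ := by
    intro X
    rcases le_total X.card k with hX | hX
    · rw [h2 X hX, min_eq_left (by omega)]
    · have hc : Xᶜ.card = m - X.card := by rw [Finset.card_compl, Fintype.card_fin]
      rw [← QQ_compl, h2 Xᶜ (by omega), hc, min_eq_right (by omega)]
  have h4 := shadow ψ
  simp only [h3] at h4
  rw [← Finset.powerset_univ, Finset.sum_powerset_apply_card
    (fun j => (-1 : ℂ) ^ j * (2 ^ (min j (m - j)))⁻¹)] at h4
  rcases hm with ⟨rfl, rfl⟩ | ⟨rfl, rfl⟩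
  · simp [Finset.sum_range_succ, Nat.choose] at h4
    norm_num at h4
  · simp [Finset.sum_range_succ, Nat.choose] at h4
    norm_num at h4

end part4

section part5
open Finset

structure EF {n : ℕ} (Γ : Finset (Fin n) → Prop) (f : Finset (Fin n) → ℝ) : Prop where
  sub : ∀ X Y, Disjoint X Y → f (X ∪ Y) ≤ f X + f Y
  mon : ∀ X Y Y', Disjoint X Y → Y' ⊆ Y → f (X ∪ Y) = f X + f Y → f (X ∪ Y') = f X + f Y'
  mon' : ∀ X Y Y', Disjoint X Y → Y' ⊆ Y → f (X ∪ Y)ᶜ = f X + f Yᶜ → f (X ∪ Y')ᶜ = f X + f Y'ᶜ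
  single : ∀ i, f {i} ≤ 1
  empty : f ∅ = 0
  auth : ∀ A, Γ A → f A = f Aᶜ + 1

structure AccS {n : ℕ} (k : ℕ) (Γ : Finset (Fin n) → Prop) : Prop where
  mono : Monotonic Γ
  nc : NoCloning Γ
  nr : NoRedundancy Γ
  hom : ∀ A : Finset (Fin n), IsMinimal Γ A → A.card = k

lemma ex_min {n : ℕ} (Γ : Finset (Fin n) → Prop) (A : Finset (Fin n)) :
    Γ A → ∃ B, B ⊆ A ∧ IsMinimal Γ B := by
  induction A using Finset.strongInduction with
  | H A ih =>
    intro hA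
    by_cases h : ∀ B, B ⊂ A → ¬ Γ B
    · exact ⟨A, Finset.Subset.refl _, hA, h⟩
    · push Not at h
      obtain ⟨B, hB, hΓ⟩ := h
      obtain ⟨E, hE, hm⟩ := ih B hB hΓ
      exact ⟨E, hE.trans hB.1, hm⟩

variable {n k : ℕ} {Γ : Finset (Fin n) → Prop} {f : Finset (Fin n) → ℝ}

lemma AccS.not_small (a : AccS k Γ) {A : Finset (Fin n)} (h : A.card < k) : ¬ Γ A := by
  intro hA
  obtain ⟨B, hB, hm⟩ := ex_min Γ A hA
  have := a.hom B hm
  have := Finset.card_le_card hB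
  omega

lemma AccS.min_of_card (a : AccS k Γ) {A : Finset (Fin n)} (hA : Γ A) (h : A.card = k) :
    IsMinimal Γ A :=
  ⟨hA, fun B hB => a.not_small (by have := Finset.card_lt_card hB; omega)⟩

lemma AccS.avoid (a : AccS k Γ) {X : Finset (Fin n)} (h : ¬ Γ X) :
    ∃ E, IsMinimal Γ E ∧ Disjoint E X := by
  have h1 : Γ Xᶜ := by
    by_contra h2
    exact h ((a.nc X).mpr h2)
  obtain ⟨E, hE, hm⟩ := ex_min Γ _ h1
  exact ⟨E, hm, Finset.disjoint_left.mpr fun i hi hx => Finset.mem_compl.mp (hE hi) hx⟩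

lemma AccS.avoid' (a : AccS k Γ) {X : Finset (Fin n)} (h : X.card < k) :
    ∃ E, IsMinimal Γ E ∧ Disjoint E X := a.avoid (a.not_small h)

lemma AccS.meet (a : AccS k Γ) {A B : Finset (Fin n)} (hA : IsMinimal Γ A) (hB : IsMinimal Γ B)
    (h : Disjoint A B) : False := by
  have h1 : Γ Aᶜ := a.mono B _ hB.1 fun i hi => Finset.mem_compl.mpr fun h' =>
    Finset.disjoint_left.mp h h' hi
  exact (a.nc A).mp hA.1 h1

lemma AccS.compl_small (a : AccS k Γ) {A : Finset (Fin n)} (h : A.card < k) : Γ Aᶜ := by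
  by_contra h2
  exact a.not_small h ((a.nc A).mpr h2)

lemma E1s (a : AccS k Γ) (e : EF Γ f) {A : Finset (Fin n)} (hA : IsMinimal Γ A) {c : Fin n}
    (hc : c ∈ A) : f {c} = 1 ∧ f ({c} ∪ A.erase c) = f {c} + f (A.erase c) := by
  have hd : Disjoint {c} (A.erase c) := by simp
  have hu : {c} ∪ A.erase c = A := by ext i; by_cases h : i = c <;> simp [h, hc]
  have h1 := e.sub _ _ hd
  have h2 := e.auth A hA.1
  have h3 : Γ (A.erase c)ᶜ := by
    by_contra h
    exact hA.2 _ (Finset.erase_ssubset hc) ((a.nc _).mpr h)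
  have h4 := e.auth _ h3
  rw [compl_compl] at h4
  have h5 : (A.erase c)ᶜ = {c} ∪ Aᶜ := by ext i; by_cases h : i = c <;> simp [h]
  have h6 := e.sub {c} Aᶜ (by simp [hc])
  rw [← h5, h4] at h6
  have h7 := e.single c
  rw [hu] at h1 ⊢
  constructor <;> linarith

lemma E1 (a : AccS k Γ) (e : EF Γ f) {A : Finset (Fin n)} (hA : IsMinimal Γ A) (X : Finset (Fin n))
    (hX : X ⊆ A) : f X = X.card := by
  induction X using Finset.induction_on with
  | empty => simp [e.empty]
  | insert c X hc ih =>
    have hcA : c ∈ A := hX (Finset.mem_insert_self _ _)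
    obtain ⟨h1, h2⟩ := E1s a e hA hcA
    have h3 := e.mon _ _ X (by simp) (by
      intro i hi
      exact Finset.mem_erase.mpr ⟨fun h => hc (h ▸ hi), hX (Finset.mem_insert_of_mem hi)⟩) h2
    rw [Finset.insert_eq, h3, h1, ih ((Finset.subset_insert _ _).trans hX), ← Finset.insert_eq,
      Finset.card_insert_of_notMem hc]
    push_cast
    ring

lemma E2 (a : AccS k Γ) (e : EF Γ f) {A B : Finset (Fin n)} (hA : IsMinimal Γ A)
    (hB : IsMinimal Γ B) (h : (A ∩ B).card + 1 = k) : f (A ∪ B)ᶜ = k - 2 := by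
  have cA := a.hom A hA
  have cB := a.hom B hB
  have c1 := Finset.card_sdiff_add_card_inter A B
  have c2 := Finset.card_sdiff_add_card_inter B A
  rw [Finset.inter_comm B A] at c2
  obtain ⟨c, hc⟩ := Finset.card_eq_one.mp (show (A \ B).card = 1 by omega)
  obtain ⟨d, hd⟩ := Finset.card_eq_one.mp (show (B \ A).card = 1 by omega)
  have mc : ∀ i, i = c ↔ i ∈ A ∧ i ∉ B := by
    intro i; rw [← Finset.mem_singleton, ← hc, Finset.mem_sdiff]
  have md : ∀ i, i = d ↔ i ∈ B ∧ i ∉ A := by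
    intro i; rw [← Finset.mem_singleton, ← hd, Finset.mem_sdiff]
  have hdB : d ∈ B ∧ d ∉ A := (md d).mp rfl
  have hcA : c ∈ A ∧ c ∉ B := (mc c).mp rfl
  have e1 : Aᶜ = {d} ∪ (A ∪ B)ᶜ := by
    ext i; simp only [mem_compl, mem_union, mem_singleton, md]; tauto
  have e2 : (A ∩ B)ᶜ = {d} ∪ Bᶜ := by
    ext i; simp only [mem_compl, mem_union, mem_singleton, md, mem_inter]; tauto
  have f1 := e.auth A hA.1
  have f2 := e.auth B hB.1
  have f3 := e.auth _ (a.compl_small (show (A ∩ B).card < k by omega))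
  rw [compl_compl, E1 a e hA _ Finset.inter_subset_left] at f3
  rw [E1 a e hA _ (Finset.Subset.refl _), cA] at f1
  rw [E1 a e hB _ (Finset.Subset.refl _), cB] at f2
  have f4 := (E1s a e hB hdB.1).1
  have hk : ((A ∩ B).card : ℝ) + 1 = k := by exact_mod_cast h
  have f5 := e.mon {d} Bᶜ (A ∪ B)ᶜ (by simp [hdB.1])
    (by intro i; simp only [mem_compl, mem_union]; tauto)
    (by rw [← e2]; linarith)
  rw [← e1] at f5
  linarith

def Uncov {n : ℕ} (Γ : Finset (Fin n) → Prop) : Prop :=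
  ∀ (A B E : Finset (Fin n)) (p q : Fin n), IsMinimal Γ A → IsMinimal Γ B → (A ∩ B).card = 2 →
    p ≠ q → p ∉ A ∪ B → q ∉ A ∪ B → IsMinimal Γ E → p ∈ E → q ∈ E → False

lemma card_un {A B : Finset (Fin n)} (a : AccS 3 Γ) (hA : IsMinimal Γ A) (hB : IsMinimal Γ B)
    (h : (A ∩ B).card = 2) : (A ∪ B).card = 4 := by
  have := Finset.card_union_add_card_inter A B
  rw [a.hom A hA, a.hom B hB] at this
  omega

lemma uncov6 (hn : n = 6) (a : AccS 3 Γ) (e : EF Γ f) : Uncov Γ := by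
  intro A B E p q hA hB h hpq hp hq hE hpE hqE
  have h1 := E2 a e hA hB (by omega)
  have h2 := card_un a hA hB h
  have h3 : {p, q} = (A ∪ B)ᶜ := by
    apply Finset.eq_of_subset_of_card_le
    · intro i hi
      simp only [mem_insert, mem_singleton] at hi
      rcases hi with rfl | rfl <;> rwa [mem_compl]
    · rw [Finset.card_compl, Fintype.card_fin, Finset.card_pair hpq]; omega
  rw [← h3, E1 a e hE _ (by intro i; simp only [mem_insert, mem_singleton]; rintro (rfl | rfl) <;> assumption),
    Finset.card_pair hpq] at h1
  norm_num at h1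

lemma uncov7 (hn : n = 7) (a : AccS 3 Γ) (e : EF Γ f) : Uncov Γ := by
  intro A B E0 p q hA hB h hpq hp hq hE0 hpE hqE
  have hfC := E2 a e hA hB (by omega)
  have hK := card_un a hA hB h
  set K := A ∪ B with hKdef
  have hC : Kᶜ.card = 3 := by rw [Finset.card_compl, Fintype.card_fin]; omega
  have H : ∀ p q r, p ∉ K → q ∉ K → r ∉ K → p ≠ q → p ≠ r → q ≠ r →
      (∃ E, IsMinimal Γ E ∧ p ∈ E ∧ q ∈ E) → ∀ E, IsMinimal Γ E → r ∈ E → p ∈ E ∨ q ∈ E := by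
    rintro p q r hp hq hr hpq hpr hqr ⟨E', hE', hpE', hqE'⟩ E hE hrE
    by_contra hcon
    push Not at hcon
    have hCe : {p, q, r} = Kᶜ := by
      apply Finset.eq_of_subset_of_card_le
      · intro i hi
        simp only [mem_insert, mem_singleton] at hi
        rcases hi with rfl | rfl | rfl <;> rwa [mem_compl]
      · rw [hC, Finset.card_eq_three.mpr ⟨p, q, r, hpq, hpr, hqr, rfl⟩]
    have hmem : ∀ i, i ∉ K ↔ i = p ∨ i = q ∨ i = r := by
      intro i; rw [← mem_compl, ← hCe]; simp
    have f1 : f {p, q} = 2 := by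
      rw [E1 a e hE' _ (by intro i; simp only [mem_insert, mem_singleton]; rintro (rfl | rfl) <;> assumption),
        Finset.card_pair hpq]
      norm_num
    have f2 := (E1s a e hE hrE).1
    have s1 : ({r} ∪ K)ᶜ = {p, q} := by
      ext i
      simp only [mem_compl, mem_union, mem_singleton, mem_insert, not_or, hmem]
      constructor
      · tauto
      · rintro (rfl | rfl) <;> tauto
    have s2 : {r} ∪ E.erase r = E := by ext i; by_cases h : i = r <;> simp [h, hrE]
    have f3 := e.mon' {r} K (E.erase r) (by simpa using hr)
      (by
        intro i hi
        obtain ⟨h1, h2⟩ := Finset.mem_erase.mp hi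
        by_contra h3
        rcases (hmem i).mp h3 with rfl | rfl | rfl <;> tauto)
      (by rw [s1, f1, f2, hfC]; norm_num)
    have cE : (E.erase r).card = 2 := by rw [Finset.card_erase_of_mem hrE, a.hom E hE]
    have f4 := e.auth _ (a.compl_small (show (E.erase r).card < 3 by omega))
    rw [compl_compl, E1 a e hE _ (Finset.erase_subset _ _), cE] at f4
    have f5 := e.auth E hE.1
    rw [E1 a e hE _ (Finset.Subset.refl _), a.hom E hE] at f5
    rw [s2] at f3
    push_cast at f4 f5
    linarith
  obtain ⟨Z, hZ, hZD⟩ := a.avoid' (show (A ∩ B).card < 3 by omega)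
  have cZ := a.hom Z hZ
  have hZD' : ∀ i ∈ Z, i ∈ A → i ∉ B := fun i hi h1 h2 =>
    Finset.disjoint_left.mp hZD hi (mem_inter.mpr ⟨h1, h2⟩)
  obtain ⟨c, hcZ, hcA⟩ := Finset.not_disjoint_iff.mp (a.meet hZ hA)
  obtain ⟨d, hdZ, hdB⟩ := Finset.not_disjoint_iff.mp (a.meet hZ hB)
  have hcB := hZD' c hcZ hcA
  have hdA : d ∉ A := fun h' => hZD' d hdZ h' hdB
  have hcd : c ≠ d := fun h' => hcB (h' ▸ hdB)
  have hcK : c ∈ K := mem_union_left _ hcA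
  have hdK : d ∈ K := mem_union_right _ hdB
  have hz : ∃ z ∈ Z, z ∉ K := by
    by_contra hcon
    push Not at hcon
    have : Z ∪ (A ∩ B) ⊆ K := by
      intro i hi
      rcases mem_union.mp hi with h1 | h1
      · exact hcon i h1
      · exact mem_union_left _ (mem_inter.mp h1).1
    have := Finset.card_le_card this
    rw [Finset.card_union_of_disjoint hZD] at this
    omega
  obtain ⟨z, hzZ, hzK⟩ := hz
  have hzu : ∀ s, s ∉ K → s ≠ z → s ∉ Z := by
    intro s hs hsz hsZ
    have h1 : ({c, d, z, s} : Finset (Fin n)) ⊆ Z := by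
      intro i; simp only [mem_insert, mem_singleton]; rintro (rfl | rfl | rfl | rfl) <;> assumption
    have h2 := Finset.card_le_card h1
    have n1 : c ≠ z := fun h' => hzK (h' ▸ hcK)
    have n2 : c ≠ s := fun h' => hs (h' ▸ hcK)
    have n3 : d ≠ z := fun h' => hzK (h' ▸ hdK)
    have n4 : d ≠ s := fun h' => hs (h' ▸ hdK)
    rw [Finset.card_insert_of_notMem (by simp [hcd, n1, n2]),
      Finset.card_insert_of_notMem (by simp [n3, n4]), Finset.card_pair hsz.symm] at h2
    omega
  obtain ⟨s, t, hst, hCe⟩ := Finset.card_eq_two.mp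
    (show (Kᶜ.erase z).card = 2 by rw [Finset.card_erase_of_mem (mem_compl.mpr hzK), hC])
  have hmem : ∀ i, (i ≠ z ∧ i ∉ K) ↔ (i = s ∨ i = t) := by
    intro i; rw [← mem_compl, ← Finset.mem_erase, hCe]; simp
  obtain ⟨hsz, hsK⟩ := (hmem s).mpr (Or.inl rfl)
  obtain ⟨htz, htK⟩ := (hmem t).mpr (Or.inr rfl)
  have hun : ∀ E, IsMinimal Γ E → s ∈ E → t ∈ E → False := by
    intro E hE h1 h2
    rcases H s t z hsK htK hzK hst hsz htz ⟨E, hE, h1, h2⟩ Z hZ hzZ with h3 | h3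
    · exact hzu s hsK hsz h3
    · exact hzu t htK htz h3
  have Ws : (∃ E, IsMinimal Γ E ∧ z ∈ E ∧ s ∈ E) → ∀ E, IsMinimal Γ E → t ∈ E → z ∈ E := by
    intro h1 E hE hE2
    rcases H z s t hzK hsK htK hsz.symm htz.symm hst h1 E hE hE2 with h3 | h3
    · exact h3
    · exact (hun E hE h3 hE2).elim
  have Wt : (∃ E, IsMinimal Γ E ∧ z ∈ E ∧ t ∈ E) → ∀ E, IsMinimal Γ E → s ∈ E → z ∈ E := by
    intro h1 E hE hE2
    rcases H z t s hzK htK hsK htz.symm hsz.symm hst.symm h1 E hE hE2 with h3 | h3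
    · exact h3
    · exact (hun E hE hE2 h3).elim
  have Wst : (∀ E, IsMinimal Γ E → t ∈ E → z ∈ E) ∧ (∀ E, IsMinimal Γ E → s ∈ E → z ∈ E) := by
    have hzE : (z ∈ E0 ∧ s ∈ E0) ∨ (z ∈ E0 ∧ t ∈ E0) := by
      by_cases h1 : p = z
      · rcases (hmem q).mp ⟨fun h' => hpq (h1.trans h'.symm), hq⟩ with h2 | h2
        · left; exact ⟨h1 ▸ hpE, h2 ▸ hqE⟩
        · right; exact ⟨h1 ▸ hpE, h2 ▸ hqE⟩
      · by_cases h2 : q = z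
        · rcases (hmem p).mp ⟨h1, hp⟩ with h3 | h3
          · left; exact ⟨h2 ▸ hqE, h3 ▸ hpE⟩
          · right; exact ⟨h2 ▸ hqE, h3 ▸ hpE⟩
        · exfalso
          rcases (hmem p).mp ⟨h1, hp⟩ with h3 | h3 <;> rcases (hmem q).mp ⟨h2, hq⟩ with h4 | h4
          · exact hpq (h3.trans h4.symm)
          · exact hun E0 hE0 (h3 ▸ hpE) (h4 ▸ hqE)
          · exact hun E0 hE0 (h4 ▸ hqE) (h3 ▸ hpE)
          · exact hpq (h3.trans h4.symm)
    rcases hzE with ⟨h1, h2⟩ | ⟨h1, h2⟩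
    · have w := Ws ⟨E0, hE0, h1, h2⟩
      obtain ⟨F, hF, htF⟩ := a.nr t
      exact ⟨w, Wt ⟨F, hF, w F hF htF, htF⟩⟩
    · have w := Wt ⟨E0, hE0, h1, h2⟩
      obtain ⟨F, hF, htF⟩ := a.nr s
      exact ⟨Ws ⟨F, hF, w F hF htF, htF⟩, w⟩
  obtain ⟨y, hy⟩ := Finset.card_eq_one.mp (show ((E0.erase p).erase q).card = 1 by
    rw [Finset.card_erase_of_mem (Finset.mem_erase.mpr ⟨hpq.symm, hqE⟩),
      Finset.card_erase_of_mem hpE, a.hom E0 hE0])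
  obtain ⟨E1, hE1, hd1⟩ := a.avoid' (show ({z, y} : Finset (Fin n)).card < 3 by
    have := Finset.card_le_two (a := z) (b := y); omega)
  have hz1 : z ∉ E1 := fun h' => Finset.disjoint_left.mp hd1 h' (by simp)
  have hy1 : y ∉ E1 := fun h' => Finset.disjoint_left.mp hd1 h' (by simp)
  have hC1 : ∀ i, i ∉ K → i ∉ E1 := by
    intro i hi hi1
    by_cases h1 : i = z
    · exact hz1 (h1 ▸ hi1)
    · rcases (hmem i).mp ⟨h1, hi⟩ with rfl | rfl
      · exact hz1 (Wst.2 _ hE1 hi1)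
      · exact hz1 (Wst.1 _ hE1 hi1)
  refine a.meet hE0 hE1 (Finset.disjoint_left.mpr fun i hi hi1 => ?_)
  by_cases h1 : i = p
  · exact hC1 p hp (h1 ▸ hi1)
  by_cases h2 : i = q
  · exact hC1 q hq (h2 ▸ hi1)
  have : i ∈ (E0.erase p).erase q := by simp [h1, h2, hi]
  rw [hy, mem_singleton] at this
  exact hy1 (this ▸ hi1)

end part5

section part6
open Finset

variable {n k : ℕ} {Γ : Finset (Fin n) → Prop} {f : Finset (Fin n) → ℝ}

lemma inter_pair {E F : Finset (Fin n)} {p s x y : Fin n} (hE : ∀ i, i ∈ E ↔ i = p ∨ i = x ∨ i = y)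
    (hF : ∀ i, i ∈ F ↔ i = s ∨ i = x ∨ i = y) (h : p ≠ s) : E ∩ F = {x, y} := by
  ext i
  simp only [mem_inter, hE, hF, mem_insert, mem_singleton]
  constructor
  · rintro ⟨h1 | h1, h2 | h2⟩
    · exact (h (h1.symm.trans h2)).elim
    · exact h2
    · exact h1
    · exact h1
  · intro h1; exact ⟨Or.inr h1, Or.inr h1⟩

lemma noshare (hn : 6 ≤ n) (a : AccS 3 Γ) (U : Uncov Γ) {A B : Finset (Fin n)}
    (hA : IsMinimal Γ A) (hB : IsMinimal Γ B) (h : (A ∩ B).card = 2) : False := by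
  have hK := card_un a hA hB h
  have U1 : ∀ E p q, IsMinimal Γ E → p ∈ E → q ∈ E → p ∉ A ∪ B → q ∉ A ∪ B → p = q := by
    intro E p q hE h1 h2 h3 h4
    by_contra h5
    exact U A B E p q hA hB h h5 h3 h4 hE h1 h2
  generalize A ∪ B = K at hK U1
  have hC : 1 < Kᶜ.card := by rw [Finset.card_compl, Fintype.card_fin]; omega
  obtain ⟨p, hp, q, hq, hpq⟩ := Finset.one_lt_card.mp hC
  rw [mem_compl] at hp hq
  have T : ∀ X ⊆ K, X.card = 3 → IsMinimal Γ X := by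
    intro X hX hc
    apply a.min_of_card _ hc
    by_contra hno
    obtain ⟨E, hE, hd⟩ := a.avoid hno
    have c1 : (E \ K).card ≤ 1 := by
      rw [Finset.card_le_one]
      intro x hx y hy
      rw [mem_sdiff] at hx hy
      exact U1 E x y hE hx.1 hy.1 hx.2 hy.2
    have c2 := Finset.card_sdiff_add_card_inter E K
    have c3 : (E ∩ K) ∪ X ⊆ K := Finset.union_subset Finset.inter_subset_right hX
    have c4 := Finset.card_le_card c3
    rw [Finset.card_union_of_disjoint (hd.mono_left Finset.inter_subset_left)] at c4
    have := a.hom E hE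
    omega
  obtain ⟨E, hE, hpE⟩ := a.nr p
  obtain ⟨x, y, hxy, hEe⟩ := Finset.card_eq_two.mp
    (show (E.erase p).card = 2 by rw [Finset.card_erase_of_mem hpE, a.hom E hE])
  have mE : ∀ i, i ∈ E ↔ i = p ∨ i = x ∨ i = y := by
    intro i
    rw [← Finset.insert_erase hpE, hEe]; simp
  have hEK : ∀ F r i, IsMinimal Γ F → r ∈ F → r ∉ K → i ∈ F → i ≠ r → i ∈ K := by
    intro F r i hF hr hrK hi hir
    by_contra hiK
    exact hir (U1 F i r hF hi hr hiK hrK)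
  have hxe : x ∈ E.erase p := by rw [hEe]; simp
  have hye : y ∈ E.erase p := by rw [hEe]; simp
  rw [mem_erase] at hxe hye
  have hxK := hEK E p x hE hpE hp hxe.2 hxe.1
  have hyK := hEK E p y hE hpE hp hye.2 hye.1
  obtain ⟨u, v, huv, hKe⟩ := Finset.card_eq_two.mp
    (show ((K.erase x).erase y).card = 2 by
      rw [Finset.card_erase_of_mem (mem_erase.mpr ⟨hxy.symm, hyK⟩), Finset.card_erase_of_mem hxK, hK])
  have mK : ∀ i, (i ≠ y ∧ i ≠ x ∧ i ∈ K) ↔ (i = u ∨ i = v) := by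
    intro i; rw [← Finset.mem_erase, ← Finset.mem_erase, hKe]; simp
  obtain ⟨huy, hux, huK⟩ := (mK u).mpr (Or.inl rfl)
  obtain ⟨hvy, hvx, hvK⟩ := (mK v).mpr (Or.inr rfl)
  have hpu : u ≠ p := fun h' => hp (h' ▸ huK)
  have hpv : v ≠ p := fun h' => hp (h' ▸ hvK)
  have hqu : u ≠ q := fun h' => hq (h' ▸ huK)
  have hqv : v ≠ q := fun h' => hq (h' ▸ hvK)
  have hqx : x ≠ q := fun h' => hq (h' ▸ hxK)
  have hqy : y ≠ q := fun h' => hq (h' ▸ hyK)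
  have Q : ∀ u v, u ∈ K → v ∈ K → u ≠ x → u ≠ y → v ≠ x → v ≠ y → u ≠ v →
      ∀ F, IsMinimal Γ F → q ∈ F → v ∈ F → False := by
    intro u v huK hvK hux huy hvx hvy huv F hF h1 h2
    have hpu : u ≠ p := fun h' => hp (h' ▸ huK)
    have hpv : v ≠ p := fun h' => hp (h' ▸ hvK)
    have hqu : u ≠ q := fun h' => hq (h' ▸ huK)
    have hqv : v ≠ q := fun h' => hq (h' ▸ hvK)
    refine U E {x, y, u} F q v hE (T _ ?_ ?_) ?_ hqv.symm ?_ ?_ hF h1 h2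
    · intro i; simp only [mem_insert, mem_singleton]; rintro (rfl | rfl | rfl) <;> assumption
    · exact Finset.card_eq_three.mpr ⟨x, y, u, hxy, hux.symm, huy.symm, rfl⟩
    · have : E ∩ {x, y, u} = {x, y} := inter_pair mE
        (s := u) (fun i => by simp only [mem_insert, mem_singleton]; tauto) hpu.symm
      rw [this, Finset.card_pair hxy]
    · simp [mE, hpq.symm, hqx.symm, hqy.symm, hqu.symm]
    · simp [mE, hpv, hvx, hvy, huv.symm]
  obtain ⟨F, hF, hqF⟩ := a.nr q
  have hvF : v ∉ F := fun h' => Q u v huK hvK hux huy hvx hvy huv F hF hqF h'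
  have huF : u ∉ F := fun h' => Q v u hvK huK hvx hvy hux huy huv.symm F hF hqF h'
  have hFe : F = {q, x, y} := by
    apply Finset.eq_of_subset_of_card_le
    · intro i hi
      by_cases h1 : i = q
      · simp [h1]
      · have h2 := hEK F q i hF hqF hq hi h1
        simp only [mem_insert, mem_singleton]
        by_contra h3
        push Not at h3
        rcases (mK i).mp ⟨h3.2.2, h3.2.1, h2⟩ with rfl | rfl
        · exact huF hi
        · exact hvF hi
    · rw [a.hom F hF]; exact Finset.card_le_three
  refine U E F {x, u, v} u v hE hF ?_ huv ?_ ?_ (T _ ?_ ?_) (by simp) (by simp)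
  · have : E ∩ F = {x, y} := inter_pair mE
      (s := q) (fun i => by simp only [hFe, mem_insert, mem_singleton]) hpq
    rw [this, Finset.card_pair hxy]
  · simp [mE, huF, hpu, hux, huy]
  · simp [mE, hvF, hpv, hvx, hvy]
  · intro i; simp only [mem_insert, mem_singleton]; rintro (rfl | rfl | rfl) <;> assumption
  · exact Finset.card_eq_three.mpr ⟨x, u, v, hux.symm, hvx.symm, huv, rfl⟩

open Classical in
lemma lincount (a : AccS 3 Γ) (L : ∀ A B, IsMinimal Γ A → IsMinimal Γ B → (A ∩ B).card = 2 → False) :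
    ∃ T : Finset (Finset (Fin n)), (∀ A, A ∈ T ↔ IsMinimal Γ A) ∧
      n.choose 3 ≤ T.card * (1 + (n - 3).choose 3) ∧ T.card * 3 ≤ n.choose 2 ∧
      (∀ A B P, P.card = 2 → IsMinimal Γ A → IsMinimal Γ B → P ⊆ A → P ⊆ B → A = B) ∧
      (T.card * 3 = n.choose 2 → ∀ P : Finset (Fin n), P.card = 2 → ∃ A, IsMinimal Γ A ∧ P ⊆ A) := by
  have hT : ∀ A, A ∈ (Finset.univ.filter fun A => IsMinimal Γ A) ↔ IsMinimal Γ A := by simp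
  generalize (Finset.univ.filter fun A => IsMinimal Γ A) = T at hT
  have uq : ∀ A B P, P.card = 2 → IsMinimal Γ A → IsMinimal Γ B → P ⊆ A → P ⊆ B → A = B := by
    intro A B P hP hA hB h1 h2
    have c1 := Finset.card_le_card (Finset.subset_inter h1 h2)
    have c2 := Finset.card_le_card (Finset.inter_subset_left (s₁ := A) (s₂ := B))
    have hcA := a.hom A hA
    have hcB := a.hom B hB
    have c3 : (A ∩ B).card ≠ 2 := fun h => L A B hA hB h
    have e1 : A ∩ B = A := Finset.eq_of_subset_of_card_le Finset.inter_subset_left (by omega)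
    have e2 : A ∩ B = B := Finset.eq_of_subset_of_card_le Finset.inter_subset_right (by omega)
    rw [← e1, e2]
  have hpc : (T.biUnion fun E => powersetCard 2 E).card = T.card * 3 := by
    rw [Finset.card_biUnion, Finset.sum_const_nat (m := 3)]
    · intro E hE
      rw [Finset.card_powersetCard, a.hom E ((hT E).mp hE)]; rfl
    · intro A hA B hB hAB
      refine Finset.disjoint_left.mpr ?_
      intro P h1 h2
      rw [mem_powersetCard] at h1 h2
      exact hAB (uq A B P h1.2 ((hT A).mp hA) ((hT B).mp hB) h1.1 h2.1)
  have hps : (T.biUnion fun E => powersetCard 2 E) ⊆ powersetCard 2 (Finset.univ : Finset (Fin n)) := by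
    intro P hP
    rw [mem_biUnion] at hP
    obtain ⟨E, _, h2⟩ := hP
    rw [mem_powersetCard] at h2 ⊢
    exact ⟨Finset.subset_univ _, h2.2⟩
  have hpu : (powersetCard 2 (Finset.univ : Finset (Fin n))).card = n.choose 2 := by
    rw [Finset.card_powersetCard, Finset.card_univ, Fintype.card_fin]
  refine ⟨T, hT, ?_, ?_, uq, ?_⟩
  · have h1 : powersetCard 3 (Finset.univ : Finset (Fin n)) ⊆
        T.biUnion fun E => insert E (powersetCard 3 Eᶜ) := by
      intro X hX
      rw [mem_powersetCard] at hX
      rw [mem_biUnion]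
      by_cases hΓ : Γ X
      · exact ⟨X, (hT X).mpr (a.min_of_card hΓ hX.2), Finset.mem_insert_self _ _⟩
      · obtain ⟨E, hE, hd⟩ := a.avoid hΓ
        refine ⟨E, (hT E).mpr hE, Finset.mem_insert_of_mem (mem_powersetCard.mpr ⟨?_, hX.2⟩)⟩
        intro i hi
        exact mem_compl.mpr fun h' => Finset.disjoint_left.mp hd h' hi
    have h2 := Finset.card_le_card h1
    rw [Finset.card_powersetCard, Finset.card_univ, Fintype.card_fin] at h2
    refine h2.trans (Finset.card_biUnion_le_card_mul _ _ _ ?_)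
    intro E hE
    refine (Finset.card_insert_le _ _).trans ?_
    rw [Finset.card_powersetCard, Finset.card_compl, Fintype.card_fin, a.hom E ((hT E).mp hE)]
    omega
  · rw [← hpc, ← hpu]; exact Finset.card_le_card hps
  · intro heq P hP
    have := Finset.eq_of_subset_of_card_le hps (by rw [hpc, hpu, heq])
    have h2 : P ∈ powersetCard 2 (Finset.univ : Finset (Fin n)) :=
      mem_powersetCard.mpr ⟨Finset.subset_univ _, hP⟩
    rw [← this, mem_biUnion] at h2
    obtain ⟨A, hA, h3⟩ := h2
    exact ⟨A, (hT A).mp hA, (mem_powersetCard.mp h3).1⟩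

lemma k_bound (hn : 3 ≤ n) (a : AccS k Γ) : 2 * k ≤ n + 1 ∧ 1 ≤ k := by
  obtain ⟨A, hA, h0⟩ := a.nr ⟨0, by omega⟩
  have cA := a.hom A hA
  have : 0 < A.card := Finset.card_pos.mpr ⟨_, h0⟩
  obtain ⟨E, hE, hd⟩ := a.avoid' (X := A.erase ⟨0, by omega⟩) (by
    rw [Finset.card_erase_of_mem h0]; omega)
  have h1 := Finset.card_le_univ (E ∪ A.erase ⟨0, by omega⟩)
  rw [Finset.card_union_of_disjoint hd, Finset.card_erase_of_mem h0, Fintype.card_fin, a.hom E hE] at h1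
  omega

lemma no_k1 (hn : 3 ≤ n) (a : AccS 1 Γ) : False := by
  obtain ⟨A, hA, h0⟩ := a.nr ⟨0, by omega⟩
  obtain ⟨B, hB, h1⟩ := a.nr ⟨1, by omega⟩
  obtain ⟨x, rfl⟩ := Finset.card_eq_one.mp (a.hom A hA)
  obtain ⟨y, rfl⟩ := Finset.card_eq_one.mp (a.hom B hB)
  rw [mem_singleton] at h0 h1
  refine a.meet hA hB ?_
  rw [Finset.disjoint_singleton]
  rintro rfl
  rw [← h0] at h1
  simp at h1

lemma no_k2 (hn : 4 ≤ n) (a : AccS 2 Γ) : False := by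
  obtain ⟨A, hA, _⟩ := a.nr ⟨0, by omega⟩
  obtain ⟨x, y, hxy, rfl⟩ := Finset.card_eq_two.mp (a.hom A hA)
  obtain ⟨B, hB, hd⟩ := a.avoid' (X := {x}) (by simp)
  obtain ⟨C, hC, hd'⟩ := a.avoid' (X := {y}) (by simp)
  simp only [Finset.disjoint_singleton_right] at hd hd'
  have hyB : y ∈ B := by
    by_contra h
    exact a.meet hA hB (by simp [hd, h])
  have hxC : x ∈ C := by
    by_contra h
    exact a.meet hA hC (by simp [hd', h])
  obtain ⟨z, hzB, hzC⟩ := Finset.not_disjoint_iff.mp (a.meet hB hC)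
  have hzx : z ≠ x := fun h => hd (h ▸ hzB)
  have hzy : z ≠ y := fun h => hd' (h ▸ hzC)
  have eB : {y, z} = B := Finset.eq_of_subset_of_card_le
    (by intro i; simp only [mem_insert, mem_singleton]; rintro (rfl | rfl) <;> assumption)
    (by rw [a.hom B hB, Finset.card_pair hzy.symm])
  have eC : {x, z} = C := Finset.eq_of_subset_of_card_le
    (by intro i; simp only [mem_insert, mem_singleton]; rintro (rfl | rfl) <;> assumption)
    (by rw [a.hom C hC, Finset.card_pair hzx.symm])
  have : 0 < ({x, y, z} : Finset (Fin n))ᶜ.card := by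
    rw [Finset.card_compl, Fintype.card_fin]
    have := Finset.card_le_three (a := x) (b := y) (c := z)
    omega
  obtain ⟨d, hdm⟩ := Finset.card_pos.mp this
  simp only [mem_compl, mem_insert, mem_singleton, not_or] at hdm
  obtain ⟨D, hD, hdD⟩ := a.nr d
  obtain ⟨w, hw⟩ := Finset.card_eq_one.mp
    (show (D.erase d).card = 1 by rw [Finset.card_erase_of_mem hdD, a.hom D hD])
  have mD : ∀ i, i ∈ D → i ≠ d → i = w := by
    intro i h1 h2
    rw [← mem_singleton, ← hw]; exact mem_erase.mpr ⟨h2, h1⟩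
  have K : ∀ s t, s ≠ d → t ≠ d → IsMinimal Γ {s, t} → s = w ∨ t = w := by
    intro s t hs ht hm
    obtain ⟨i, h1, h2⟩ := Finset.not_disjoint_iff.mp (a.meet hD hm)
    simp only [mem_insert, mem_singleton] at h2
    rcases h2 with rfl | rfl
    · left; exact mD _ h1 hs
    · right; exact mD _ h1 ht
  have k1 := K x y (Ne.symm hdm.1) (Ne.symm hdm.2.1) hA
  have k2 := K y z (Ne.symm hdm.2.1) (Ne.symm hdm.2.2) (eB ▸ hB)
  have k3 := K x z (Ne.symm hdm.1) (Ne.symm hdm.2.2) (eC ▸ hC)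
  rcases k1 with h1 | h1 <;> rcases k2 with h2 | h2 <;> rcases k3 with h3 | h3 <;> subst_vars <;> simp_all

lemma min_iff (a : AccS k Γ) (h : n + 1 = 2 * k) (A : Finset (Fin n)) :
    IsMinimal Γ A ↔ A.card = k := by
  refine ⟨a.hom A, fun hA => a.min_of_card ?_ hA⟩
  have hk : Aᶜ.card + A.card = n := by rw [Finset.card_compl_add_card, Fintype.card_fin]
  have := a.compl_small (A := Aᶜ) (by omega)
  rwa [compl_compl] at this

lemma comb (hn3 : 3 ≤ n) (hn7 : n ≤ 7) (a : AccS k Γ) (e : EF Γ f) :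
    (n = 3 ∧ k = 2 ∨ n = 7 ∧ k = 4) ∨
    (n = 5 ∧ k = 3 ∧ ∀ A : Finset (Fin n), IsMinimal Γ A ↔ A.card = 3) ∨
    (n = 7 ∧ k = 3 ∧ {A : Finset (Fin n) | IsMinimal Γ A}.ncard = 7 ∧
      ∀ P : Finset (Fin n), P.card = 2 →
        ∃! A : Finset (Fin n), IsMinimal Γ A ∧ P ⊆ A) := by
  obtain ⟨h1, h2⟩ := k_bound hn3 a
  have h3 : k ≤ 4 := by omega
  interval_cases k
  · exact (no_k1 hn3 a).elim
  · by_cases h : n = 3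
    · left; left; exact ⟨h, rfl⟩
    · exact (no_k2 (by omega) a).elim
  · by_cases h5 : n = 5
    · right; left
      exact ⟨h5, rfl, fun A => min_iff a (by omega) A⟩
    · have h6 : n = 6 ∨ n = 7 := by omega
      have U : Uncov Γ := by
        rcases h6 with h | h
        · exact uncov6 h a e
        · exact uncov7 h a e
      obtain ⟨T, hT, c1, c2, uq, ex⟩ := lincount a
        (fun A B hA hB h => noshare (by omega) a U hA hB h)
      rcases h6 with rfl | rfl
      · simp [Nat.choose] at c1 c2
        omega
      · right; right
        simp [Nat.choose] at c1 c2 ex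
        have hc : T.card = 7 := by omega
        refine ⟨rfl, rfl, ?_, ?_⟩
        · have : {A : Finset (Fin 7) | IsMinimal Γ A} = (T : Set (Finset (Fin 7))) := by
            ext A; simp [hT]
          rw [this, Set.ncard_coe_finset, hc]
        · intro P hP
          obtain ⟨A, hA, hPA⟩ := ex (by omega) P hP
          exact ⟨A, ⟨hA, hPA⟩, fun B hB => uq B A P hP hB.1 hA hB.2 hPA⟩
  · left; right; exact ⟨by omega, rfl⟩

end part6

section part7
open Finset

lemma posOf_compl {n : ℕ} (A : Finset (Fin n)) : (posOf A)ᶜ = insert 0 (posOf Aᶜ) := by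
  ext i
  refine Fin.cases ?_ (fun j => ?_) i
  · simp [posOf]
  · simp [posOf]

lemma posOf_union {n : ℕ} (A B : Finset (Fin n)) : posOf (A ∪ B) = posOf A ∪ posOf B := by
  simp [posOf, Finset.image_union]

lemma posOf_disj {n : ℕ} {A B : Finset (Fin n)} (h : Disjoint A B) : Disjoint (posOf A) (posOf B) := by
  unfold posOf
  exact (Finset.disjoint_image (Fin.succ_injective _)).mpr h

lemma posOf_sub {n : ℕ} {A B : Finset (Fin n)} (h : A ⊆ B) : posOf A ⊆ posOf B :=
  Finset.image_subset_image h

lemma posOf_card {n : ℕ} (A : Finset (Fin n)) : (posOf A).card = A.card :=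
  Finset.card_image_of_injective _ (Fin.succ_injective _)

lemma posOf_ex {n : ℕ} (Z : Finset (Fin (n + 1))) (h : 0 ∉ Z) : ∃ A : Finset (Fin n), posOf A = Z := by
  refine ⟨Finset.univ.filter fun i => i.succ ∈ Z, ?_⟩
  ext i
  refine Fin.cases ?_ (fun j => ?_) i
  · simp [posOf, h]
  · simp [posOf]

lemma mkEF {n k : ℕ} {Γ : Finset (Fin n) → Prop} (a : AccS k Γ)
    (ψ : (Fin (n + 1) → Fin 2) → ℂ) (hψ : IsPureQSSState Γ ψ) :
    EF Γ (fun A => Sent ψ (posOf A) / Real.log 2) := by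
  have hN := hψ.normalized
  have hl : 0 < Real.log 2 := Real.log_pos (by norm_num)
  have hin : ∀ A : Finset (Fin n), Sent ψ (insert 0 (posOf A)) = Sent ψ (posOf Aᶜ) := by
    intro A
    rw [← sent_compl ψ (posOf Aᶜ), posOf_compl, compl_compl]
  have h0 : ¬ Γ ∅ := by
    intro h
    exact (a.nc ∅).mp h (a.mono ∅ _ h (Finset.empty_subset _))
  have p0 : posOf (∅ : Finset (Fin n)) = ∅ := by simp [posOf]
  have s0 : Sent ψ ∅ = 0 := by
    have := hψ.secrecy ∅ h0
    rw [p0] at this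
    simp at this
    linarith
  have s1 : Sent ψ {0} = Real.log 2 := by
    have h1 : Γ Finset.univ := by
      by_contra h
      apply h0
      rw [a.nc]
      simpa using h
    have h2 := hψ.recover _ h1
    have h3 := hin ∅
    rw [hin, Finset.compl_univ, p0, s0] at h2
    rw [p0, Finset.compl_empty] at h3
    have h4 : insert (0 : Fin (n+1)) (∅ : Finset (Fin (n+1))) = {0} := rfl
    rw [h4] at h3
    linarith
  refine ⟨?_, ?_, ?_, ?_, ?_, ?_⟩
  · intro X Y h
    have := (sent_sub hN (posOf_disj h)).1
    rw [← add_div, posOf_union]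
    gcongr
  · intro X Y Y' h hY he
    rw [← add_div, posOf_union] at he ⊢
    rw [div_left_inj' hl.ne'] at he ⊢
    exact sent_mon hN (posOf_disj h) (posOf_sub hY) he
  · intro X Y Y' h hY he
    rw [← add_div, ← hin, ← hin, posOf_union, ← Finset.union_insert] at he ⊢
    rw [div_left_inj' hl.ne'] at he ⊢
    refine sent_mon hN ?_ (Finset.insert_subset_insert _ (posOf_sub hY)) he
    rw [Finset.disjoint_insert_right]
    exact ⟨by simp [posOf], posOf_disj h⟩
  · intro i
    have := (sent_max hN (posOf {i})).1
    rw [posOf_card] at this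
    rw [div_le_one hl]
    simpa using this
  · simp [p0, s0]
  · intro A hA
    have := hψ.recover A hA
    rw [hin, s1] at this
    field_simp
    linarith

theorem final (n k : ℕ) (hn3 : 3 ≤ n) (hn7 : n ≤ 7) 
    (Γ : Finset (Fin n) → Prop) (a : AccS k Γ)
    (ψ : (Fin (n + 1) → Fin 2) → ℂ) (hψ : IsPureQSSState Γ ψ) :
    (n = 5 ∧ k = 3 ∧ ∀ A : Finset (Fin n), IsMinimal Γ A ↔ A.card = 3) ∨
    (n = 7 ∧ k = 3 ∧ {A : Finset (Fin n) | IsMinimal Γ A}.ncard = 7 ∧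
      ∀ P : Finset (Fin n), P.card = 2 →
        ∃! A : Finset (Fin n), IsMinimal Γ A ∧ P ⊆ A) := by
  have e := mkEF a ψ hψ
  rcases comb hn3 hn7 a e with h | h
  · exfalso
    have hl : 0 < Real.log 2 := Real.log_pos (by norm_num)
    have h2 : n + 1 = 2 * k := by omega
    have main : ∀ A : Finset (Fin n), A.card = k → Sent ψ (posOf A) = k * Real.log 2 := by
      intro A hA
      have := E1 a e ((min_iff a h2 A).mpr hA) A (Finset.Subset.refl _)
      rw [div_eq_iff hl.ne', hA] at this
      exact this
    refine no_ame (m := n + 1) (k := k) (by omega) hψ.normalized ?_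
    intro Z hZ
    by_cases h0 : 0 ∈ Z
    · obtain ⟨A, hA⟩ := posOf_ex Zᶜ (by simpa using h0)
      rw [← sent_compl, ← hA]
      apply main
      rw [← posOf_card, hA, Finset.card_compl, Fintype.card_fin]
      omega
    · obtain ⟨A, rfl⟩ := posOf_ex Z h0
      exact main A (by rw [← hZ, posOf_card])
  · exact h

end part7

theorem stmt11 (n k : ℕ) (hn3 : 3 ≤ n) (hn7 : n ≤ 7) (hk : 1 ≤ k)
    (Γ : Finset (Fin n) → Prop)
    (hmono : Monotonic Γ) (hnc : NoCloning Γ) (hnr : NoRedundancy Γ)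
    (hhom : ∀ A : Finset (Fin n), IsMinimal Γ A → A.card = k)
    (ψ : (Fin (n + 1) → Fin 2) → ℂ) (hψ : IsPureQSSState Γ ψ) :
    (n = 5 ∧ k = 3 ∧ ∀ A : Finset (Fin n), IsMinimal Γ A ↔ A.card = 3) ∨
    (n = 7 ∧ k = 3 ∧ {A : Finset (Fin n) | IsMinimal Γ A}.ncard = 7 ∧
      ∀ P : Finset (Fin n), P.card = 2 →
        ∃! A : Finset (Fin n), IsMinimal Γ A ∧ P ⊆ A) := by
  exact final n k hn3 hn7 Γ ⟨hmono, hnc, hnr, hhom⟩ ψ hψ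
end

section
/- Let Γ be an access structure on 5 players satisfying monotonicity, no-cloning and no-redundancy that admits a pure QSS state. Then Γ is homogeneous: all sets in Γ_min have the same cardinality. -/
open Finset

namespace QSSAux
open Matrix
open scoped ComplexOrder
set_option linter.unusedSectionVars false

variable {ι α β : Type} [Fintype ι] [DecidableEq ι] [Fintype α] [DecidableEq α]
  [Fintype β] [DecidableEq β]

lemma vn_herm {ρ : Matrix ι ι ℂ} (h : ρ.IsHermitian) :
    vnEntropy ρ = ∑ i, Real.negMulLog (h.eigenvalues i) := by
  unfold vnEntropy
  rw [dif_pos h]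

lemma vn_roots {ρ : Matrix ι ι ℂ} (h : ρ.IsHermitian) :
    vnEntropy ρ = (ρ.charpoly.roots.map (fun z : ℂ => Real.negMulLog z.re)).sum := by
  rw [vn_herm h, h.roots_charpoly_eq_eigenvalues, Multiset.map_map]
  rfl

lemma vn_reindex {ρ : Matrix α α ℂ} (h : ρ.IsHermitian) (e : β ≃ α) :
    vnEntropy (ρ.submatrix e e) = vnEntropy ρ := by
  rw [vn_roots h, vn_roots (h.submatrix e)]
  have := Matrix.charpoly_reindex e.symm ρ
  rw [Matrix.reindex_apply] at this
  simp only [Equiv.symm_symm] at this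
  rw [this]

lemma vn_transpose {ρ : Matrix α α ℂ} (h : ρ.IsHermitian) :
    vnEntropy ρᵀ = vnEntropy ρ := by
  rw [vn_roots h, vn_roots h.transpose, Matrix.charpoly_transpose]

lemma vn_purify (M : Matrix α β ℂ) : vnEntropy (M * Mᴴ) = vnEntropy (Mᴴ * M) := by
  rw [vn_roots (Matrix.isHermitian_mul_conjTranspose_self M),
    vn_roots (Matrix.isHermitian_conjTranspose_mul_self M)]
  have h := Matrix.charpoly_mul_comm' M Mᴴ
  have h2 := congrArg (fun p : Polynomial ℂ =>
    (p.roots.map (fun z : ℂ => Real.negMulLog z.re)).sum) h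
  have n1 := (Matrix.charpoly_monic (M * Mᴴ)).ne_zero
  have n2 := (Matrix.charpoly_monic (Mᴴ * M)).ne_zero
  have nX : ∀ k : ℕ, (Polynomial.X ^ k : Polynomial ℂ) ≠ 0 := fun k => pow_ne_zero _ Polynomial.X_ne_zero
  rw [Polynomial.roots_mul (mul_ne_zero (nX _) n1), Polynomial.roots_mul (mul_ne_zero (nX _) n2)] at h2
  simpa [Polynomial.roots_X_pow, Multiset.map_nsmul, Multiset.sum_nsmul] using h2

/-- Jensen / Schur: the entropy is at most that of the diagonal in any basis. -/
lemma vn_le_diag {ρ : Matrix ι ι ℂ} (h : ρ.PosSemidef) (V : Matrix ι ι ℂ)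
    (hV : V * Vᴴ = 1) :
    vnEntropy ρ ≤ ∑ k, Real.negMulLog ((Vᴴ * ρ * V) k k).re := by
  have hV' : Vᴴ * V = 1 := mul_eq_one_comm.mp hV
  have hH := h.isHermitian
  set U : Matrix ι ι ℂ := (hH.eigenvectorUnitary : Matrix ι ι ℂ) with hU
  have hUU : U * Uᴴ = 1 := Unitary.mul_star_self_of_mem hH.eigenvectorUnitary.2
  have hUU' : Uᴴ * U = 1 := mul_eq_one_comm.mp hUU
  have hsp : ρ = U * diagonal (fun i => (hH.eigenvalues i : ℂ)) * Uᴴ := by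
    have := hH.spectral_theorem
    rw [Unitary.conjStarAlgAut_apply] at this
    exact this
  set W := Vᴴ * U with hW
  have hWW : W * Wᴴ = 1 := by
    rw [hW, conjTranspose_mul, conjTranspose_conjTranspose, Matrix.mul_assoc, ← Matrix.mul_assoc U, hUU,
      Matrix.one_mul, hV']
  have hWW' : Wᴴ * W = 1 := mul_eq_one_comm.mp hWW
  have hrow : ∀ k, ∑ l, ‖W k l‖ ^ 2 = 1 := by
    intro k
    have := congrFun (congrFun hWW k) k
    rw [Matrix.mul_apply] at this
    simp only [conjTranspose_apply, one_apply_eq] at this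
    have h2 : ((∑ l, ‖W k l‖ ^ 2 : ℝ) : ℂ) = 1 := by
      rw [← this]
      push_cast
      refine Finset.sum_congr rfl fun l _ => ?_
      exact (Complex.mul_conj' _).symm
    exact_mod_cast h2
  have hcol : ∀ l, ∑ k, ‖W k l‖ ^ 2 = 1 := by
    intro k
    have := congrFun (congrFun hWW' k) k
    rw [Matrix.mul_apply] at this
    simp only [conjTranspose_apply, one_apply_eq] at this
    have h2 : ((∑ l, ‖W l k‖ ^ 2 : ℝ) : ℂ) = 1 := by
      rw [← this]
      push_cast
      refine Finset.sum_congr rfl fun l _ => ?_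
      exact (Complex.conj_mul' _).symm
    exact_mod_cast h2
  have hp : ∀ k, ((Vᴴ * ρ * V) k k).re = ∑ l, ‖W k l‖ ^ 2 * hH.eigenvalues l := by
    intro k
    have e1 : Vᴴ * ρ * V = W * diagonal (fun i => (hH.eigenvalues i : ℂ)) * Wᴴ := by
      conv_lhs => rw [hsp]
      rw [hW, conjTranspose_mul, conjTranspose_conjTranspose]
      simp only [Matrix.mul_assoc]
    rw [e1, Matrix.mul_apply, Complex.re_sum]
    refine Finset.sum_congr rfl fun l _ => ?_
    rw [mul_diagonal, conjTranspose_apply]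
    have : W k l * (hH.eigenvalues l : ℂ) * star (W k l)
        = ((‖W k l‖ ^ 2 * hH.eigenvalues l : ℝ) : ℂ) := by
      push_cast
      rw [← Complex.mul_conj']
      simp only [starRingEnd_apply]
      ring
    rw [this, Complex.ofReal_re]
  rw [vn_herm hH]
  calc ∑ i, Real.negMulLog (hH.eigenvalues i)
      = ∑ l, (∑ k, ‖W k l‖ ^ 2) * Real.negMulLog (hH.eigenvalues l) := by
        simp [hcol]
    _ = ∑ k, ∑ l, ‖W k l‖ ^ 2 * Real.negMulLog (hH.eigenvalues l) := by
        simp_rw [Finset.sum_mul]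
        exact Finset.sum_comm
    _ ≤ _ := by
        refine Finset.sum_le_sum fun k _ => ?_
        rw [hp k]
        have := Real.concaveOn_negMulLog.le_map_sum (t := Finset.univ) (w := fun l => ‖W k l‖ ^ 2)
          (p := hH.eigenvalues) (fun _ _ => by positivity) (hrow k)
          (fun l _ => h.eigenvalues_nonneg l)
        simpa using this

lemma classical_subadd (p : α → β → ℝ) (hp : ∀ i j, 0 ≤ p i j) :
    ∑ i, ∑ j, p i j = 1 → ∑ i, ∑ j, Real.negMulLog (p i j) ≤
      ∑ i, Real.negMulLog (∑ j, p i j) + ∑ j, Real.negMulLog (∑ i, p i j) := by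
  intro hs
  set a := fun i => ∑ j, p i j with ha
  set b := fun j => ∑ i, p i j with hb
  have hsa : ∑ i, a i = 1 := hs
  have hsb : ∑ j, b j = 1 := by rw [hb, Finset.sum_comm]; exact hs
  have e1 : ∑ i, Real.negMulLog (a i) = ∑ i, ∑ j, - p i j * Real.log (a i) := by
    refine Finset.sum_congr rfl fun i _ => ?_
    rw [Real.negMulLog, ← Finset.sum_mul, Finset.sum_neg_distrib]
  have e2 : ∑ j, Real.negMulLog (b j) = ∑ i, ∑ j, - p i j * Real.log (b j) := by
    rw [Finset.sum_comm]
    refine Finset.sum_congr rfl fun i _ => ?_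
    rw [Real.negMulLog, ← Finset.sum_mul, Finset.sum_neg_distrib]
  have e3 : ∑ i, ∑ j, (a i * b j - p i j) = 0 := by
    have : ∀ i, ∑ j, (a i * b j - p i j) = 0 := by
      intro i
      rw [Finset.sum_sub_distrib, ← Finset.mul_sum, hsb, mul_one]
      exact sub_self _
    simp [this]
  have key : ∀ i j, Real.negMulLog (p i j) ≤
      - p i j * Real.log (a i) + - p i j * Real.log (b j) + (a i * b j - p i j) := by
    intro i j
    have ha0 : p i j ≤ a i := Finset.single_le_sum (f := fun j => p i j) (fun j _ => hp i j) (Finset.mem_univ j)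
    have hb0 : p i j ≤ b j := Finset.single_le_sum (f := fun i => p i j) (fun i _ => hp i j) (Finset.mem_univ i)
    rcases (hp i j).eq_or_lt with h0 | h0
    · rw [← h0] at ha0 hb0 ⊢
      simp only [Real.negMulLog_zero]
      have := mul_nonneg ha0 hb0
      linarith
    · have ha1 := h0.trans_le ha0
      have hb1 := h0.trans_le hb0
      have hl := Real.log_le_sub_one_of_pos (div_pos (mul_pos ha1 hb1) h0)
      rw [Real.log_div (mul_pos ha1 hb1).ne' h0.ne', Real.log_mul ha1.ne' hb1.ne'] at hl
      have h3 := mul_le_mul_of_nonneg_left hl h0.le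
      have h4 : p i j * (a i * b j / p i j - 1) = a i * b j - p i j := by field_simp
      rw [h4] at h3
      rw [Real.negMulLog]
      linarith
  calc ∑ i, ∑ j, Real.negMulLog (p i j) ≤ ∑ i, ∑ j, (- p i j * Real.log (a i) + - p i j * Real.log (b j) + (a i * b j - p i j)) :=
        Finset.sum_le_sum fun i _ => Finset.sum_le_sum fun j _ => key i j
    _ = _ := by
        simp_rw [Finset.sum_add_distrib]
        rw [e3, e1, e2, add_zero]

/-- partial traces -/
def trR (ρ : Matrix (α × β) (α × β) ℂ) : Matrix α α ℂ := fun a a' => ∑ b, ρ (a, b) (a', b)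
def trL (ρ : Matrix (α × β) (α × β) ℂ) : Matrix β β ℂ := fun b b' => ∑ a, ρ (a, b) (a, b')

lemma diag_marg (ρ : Matrix (α × β) (α × β) ℂ) (A : Matrix α α ℂ) (B : Matrix β β ℂ)
    (hB : B * Bᴴ = 1) (i : α) :
    ∑ j, ((kroneckerMap (· * ·) A B)ᴴ * ρ * kroneckerMap (· * ·) A B) (i, j) (i, j)
      = (Aᴴ * trR ρ * A) i i := by
  have hB' : ∀ b b', ∑ j, B b j * star (B b' j) = if b = b' then 1 else 0 := by
    intro b b'
    have := congrFun (congrFun hB b) b'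
    rw [Matrix.mul_apply, one_apply] at this
    exact this
  simp only [Matrix.mul_apply, Fintype.sum_prod_type, conjTranspose_apply, kroneckerMap_apply, trR,
    Finset.sum_mul, Finset.mul_sum, star_mul']
  calc _ = ∑ a', ∑ a, ∑ b', ∑ b, star (A a i) * ρ (a, b) (a', b') * A a' i * (∑ j, B b' j * star (B b j)) := by
        simp only [Finset.mul_sum]
        rw [Finset.sum_comm]
        refine Finset.sum_congr rfl fun a' _ => ?_
        rw [Finset.sum_comm' (t' := Finset.univ) (s' := fun _ => Finset.univ) (by simp)]
        rw [Finset.sum_comm]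
        rw [Finset.sum_comm (s := (Finset.univ : Finset α))]
        rw [Finset.sum_comm]
        refine Finset.sum_congr rfl fun b' _ => ?_
        rw [Finset.sum_comm]
        refine Finset.sum_congr rfl fun a _ => ?_
        rw [Finset.sum_comm]
        refine Finset.sum_congr rfl fun b _ => ?_
        refine Finset.sum_congr rfl fun j _ => ?_
        ring
    _ = _ := by
        simp only [hB']
        simp

end QSSAux

namespace QSSAux
open Matrix
open scoped ComplexOrder
set_option linter.unusedSectionVars false

variable {ι α β : Type} [Fintype ι] [DecidableEq ι] [Fintype α] [DecidableEq α]
  [Fintype β] [DecidableEq β]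

lemma diag_marg' (ρ : Matrix (α × β) (α × β) ℂ) (A : Matrix α α ℂ) (B : Matrix β β ℂ)
    (hA : A * Aᴴ = 1) (j : β) :
    ∑ i, ((kroneckerMap (· * ·) A B)ᴴ * ρ * kroneckerMap (· * ·) A B) (i, j) (i, j)
      = (Bᴴ * trL ρ * B) j j := by
  have h := diag_marg (ρ.submatrix Prod.swap Prod.swap) B A hA j
  have e : (kroneckerMap (· * ·) B A) =
      (kroneckerMap (· * ·) A B).submatrix (Equiv.prodComm β α) (Equiv.prodComm β α) := by
    ext x y
    simp [mul_comm]
  have e2 : ρ.submatrix Prod.swap Prod.swap =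
      ρ.submatrix (Equiv.prodComm β α) (Equiv.prodComm β α) := rfl
  rw [show trR (ρ.submatrix Prod.swap Prod.swap) = trL ρ from rfl, e2, e, conjTranspose_submatrix,
    submatrix_mul_equiv, submatrix_mul_equiv] at h
  exact h

lemma herm_diag {ρ : Matrix ι ι ℂ} (h : ρ.IsHermitian) :
    ((h.eigenvectorUnitary : Matrix ι ι ℂ))ᴴ * ρ * (h.eigenvectorUnitary : Matrix ι ι ℂ)
      = diagonal (fun i => (h.eigenvalues i : ℂ)) := by
  have := h.conjStarAlgAut_star_eigenvectorUnitary
  rw [Unitary.conjStarAlgAut_apply] at this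
  simpa [star_eq_conjTranspose, Function.comp_def] using this

lemma trR_herm {ρ : Matrix (α × β) (α × β) ℂ} (h : ρ.IsHermitian) : (trR ρ).IsHermitian := by
  ext a a'
  simp only [conjTranspose_apply, trR, star_sum]
  exact Finset.sum_congr rfl fun b _ => h.apply _ _

lemma trL_herm {ρ : Matrix (α × β) (α × β) ℂ} (h : ρ.IsHermitian) : (trL ρ).IsHermitian := by
  ext a a'
  simp only [conjTranspose_apply, trL, star_sum]
  exact Finset.sum_congr rfl fun b _ => h.apply _ _

lemma eig_sum {ρ : Matrix ι ι ℂ} (h : ρ.IsHermitian) (ht : ρ.trace = 1) :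
    ∑ i, h.eigenvalues i = 1 := by
  have := h.trace_eq_sum_eigenvalues
  rw [ht] at this
  have h2 : ((∑ i, h.eigenvalues i : ℝ) : ℂ) = 1 := by push_cast; exact this.symm
  exact_mod_cast h2

lemma vn_subadd {ρ : Matrix (α × β) (α × β) ℂ} (h : ρ.PosSemidef) (ht : ρ.trace = 1) :
    vnEntropy ρ ≤ vnEntropy (trR ρ) + vnEntropy (trL ρ) := by
  have hR := trR_herm h.isHermitian
  have hL := trL_herm h.isHermitian
  set A : Matrix α α ℂ := (hR.eigenvectorUnitary : Matrix α α ℂ) with hA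
  set B : Matrix β β ℂ := (hL.eigenvectorUnitary : Matrix β β ℂ) with hB
  have hAA : A * Aᴴ = 1 := Unitary.mul_star_self_of_mem hR.eigenvectorUnitary.2
  have hBB : B * Bᴴ = 1 := Unitary.mul_star_self_of_mem hL.eigenvectorUnitary.2
  set V := kroneckerMap (· * ·) A B with hV
  have hVV : V * Vᴴ = 1 := by
    rw [hV]
    have h1 := Matrix.mul_kronecker_mul A Aᴴ B Bᴴ
    rw [hAA, hBB, Matrix.one_kronecker_one, ← Matrix.conjTranspose_kronecker] at h1
    exact h1.symm
  have h1 := vn_le_diag h V hVV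
  set p : α → β → ℝ := fun i j => ((Vᴴ * ρ * V) (i, j) (i, j)).re with hp
  have hp0 : ∀ i j, 0 ≤ p i j := fun i j =>
    (Complex.nonneg_iff.mp (h.conjTranspose_mul_mul_same V).diag_nonneg).1
  have hpa : ∀ i, ∑ j, p i j = hR.eigenvalues i := by
    intro i
    have := congrArg Complex.re (diag_marg ρ A B hBB i)
    rw [Complex.re_sum, herm_diag hR, diagonal_apply_eq, Complex.ofReal_re] at this
    exact this
  have hpb : ∀ j, ∑ i, p i j = hL.eigenvalues j := by
    intro i
    have := congrArg Complex.re (diag_marg' ρ A B hAA i)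
    rw [Complex.re_sum, herm_diag hL, diagonal_apply_eq, Complex.ofReal_re] at this
    exact this
  have hps : ∑ i, ∑ j, p i j = 1 := by
    simp_rw [hpa]
    apply eig_sum hR
    rw [← ht]
    simp [Matrix.trace, trR, Fintype.sum_prod_type]
  have h2 := classical_subadd p hp0 hps
  simp_rw [hpa, hpb] at h2
  rw [vn_herm hR, vn_herm hL]
  refine h1.trans (le_trans (le_of_eq ?_) h2)
  rw [Fintype.sum_prod_type]

lemma negMulLog_tangent {N l : ℝ} (hN : 0 < N) (hl : 0 ≤ l) :
    Real.negMulLog l ≤ l * Real.log N + (1 / N - l) ∧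
    (Real.negMulLog l = l * Real.log N + (1 / N - l) → l = 1 / N) := by
  rcases hl.eq_or_lt with h0 | h0
  · subst h0
    have : 0 < 1 / N := by positivity
    simp only [Real.negMulLog_zero]
    constructor
    · linarith
    · intro h; linarith
  · have hx : 0 < 1 / (N * l) := by positivity
    have e : Real.log (1 / (N * l)) = - Real.log N - Real.log l := by
      rw [one_div, Real.log_inv, Real.log_mul hN.ne' h0.ne']; ring
    have e2 : l * (1 / (N * l) - 1) = 1 / N - l := by field_simp
    constructor
    · have h3 := mul_le_mul_of_nonneg_left (Real.log_le_sub_one_of_pos hx) h0.le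
      rw [e, e2] at h3
      rw [Real.negMulLog]; linarith
    · intro h
      by_contra hne
      have hne' : 1 / (N * l) ≠ 1 := by
        intro h1
        apply hne
        field_simp at h1 ⊢
        linarith
      have h3 := mul_lt_mul_of_pos_left (Real.log_lt_sub_one_of_pos hx hne') h0
      rw [e, e2] at h3
      rw [Real.negMulLog] at h
      linarith

lemma vn_le_log {ρ : Matrix ι ι ℂ} (h : ρ.PosSemidef) (ht : ρ.trace = 1) [Nonempty ι] :
    vnEntropy ρ ≤ Real.log (Fintype.card ι) ∧
    (vnEntropy ρ = Real.log (Fintype.card ι) → ρ = ((Fintype.card ι : ℂ)⁻¹) • 1) := by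
  have hH := h.isHermitian
  have hN : (0 : ℝ) < Fintype.card ι := by exact_mod_cast Fintype.card_pos
  have hs := eig_sum hH ht
  have hsum : ∑ i, (hH.eigenvalues i * Real.log (Fintype.card ι) +
      (1 / (Fintype.card ι : ℝ) - hH.eigenvalues i)) = Real.log (Fintype.card ι) := by
    rw [Finset.sum_add_distrib, Finset.sum_sub_distrib, ← Finset.sum_mul, hs]
    simp
  rw [vn_herm hH]
  constructor
  · rw [← hsum]
    exact Finset.sum_le_sum fun i _ => (negMulLog_tangent hN (h.eigenvalues_nonneg i)).1
  · intro he
    conv_rhs at he => rw [← hsum]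
    rw [Finset.sum_eq_sum_iff_of_le
      (fun i _ => (negMulLog_tangent hN (h.eigenvalues_nonneg i)).1)] at he
    have hl : ∀ i, hH.eigenvalues i = 1 / (Fintype.card ι : ℝ) := fun i =>
      (negMulLog_tangent hN (h.eigenvalues_nonneg i)).2 (he i (Finset.mem_univ i))
    have := hH.spectral_theorem
    rw [Unitary.conjStarAlgAut_apply] at this
    have hd : diagonal (RCLike.ofReal ∘ hH.eigenvalues) = ((Fintype.card ι : ℂ)⁻¹) • (1 : Matrix ι ι ℂ) := by
      rw [smul_one_eq_diagonal]
      congr 1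
      ext i
      simp [hl i]
    rw [hd] at this
    simpa using this

/-- entropy lower bound from an operator upper bound -/
lemma vn_lower {ρ : Matrix ι ι ℂ} (h : ρ.PosSemidef) (ht : ρ.trace = 1)
    (hle : (((4 : ℂ)⁻¹) • (1 : Matrix ι ι ℂ) - ρ).PosSemidef) :
    Real.log 4 ≤ vnEntropy ρ := by
  have hH := h.isHermitian
  have hev : ∀ i, hH.eigenvalues i ≤ 1 / 4 := by
    intro i
    have h1 := (hle.conjTranspose_mul_mul_same (hH.eigenvectorUnitary : Matrix ι ι ℂ)).diag_nonneg (i := i)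
    rw [Matrix.mul_sub, Matrix.sub_mul, herm_diag hH] at h1
    have hu : (hH.eigenvectorUnitary : Matrix ι ι ℂ)ᴴ * (hH.eigenvectorUnitary : Matrix ι ι ℂ) = 1 :=
      Unitary.star_mul_self_of_mem hH.eigenvectorUnitary.2
    simp only [Matrix.mul_smul, Matrix.mul_one, Matrix.smul_mul, hu, Matrix.sub_apply, Matrix.smul_apply,
      Matrix.one_apply_eq, diagonal_apply_eq] at h1
    have := (Complex.nonneg_iff.mp h1).1
    norm_num at this
    linarith
  rw [vn_herm hH]
  calc Real.log 4 = ∑ i, hH.eigenvalues i * Real.log 4 := by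
        rw [← Finset.sum_mul, eig_sum hH ht, one_mul]
    _ ≤ _ := by
        refine Finset.sum_le_sum fun i _ => ?_
        rcases (h.eigenvalues_nonneg i).eq_or_lt with h0 | h0
        · rw [← h0]; simp
        · have : Real.log (hH.eigenvalues i) ≤ Real.log (1 / 4) := Real.log_le_log h0 (hev i)
          rw [one_div, Real.log_inv] at this
          rw [Real.negMulLog]
          nlinarith

/-- sign -/
def sg (x : Fin 2) : ℂ := if x = 0 then 1 else -1

/-- three-qubit spin flip -/
lemma spin_flip {T : Matrix (Fin 2 × Fin 2 × Fin 2) (Fin 2 × Fin 2 × Fin 2) ℂ} (h : T.PosSemidef)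
    (h1 : ∀ r x r' x', ∑ y, T (r, x, y) (r', x', y) = if r = r' ∧ x = x' then 4⁻¹ else 0)
    (h2 : ∀ r y r' y', ∑ x, T (r, x, y) (r', x, y') = if r = r' ∧ y = y' then 4⁻¹ else 0)
    (h3 : ∀ x y x' y', ∑ r, T (r, x, y) (r, x', y') = if x = x' ∧ y = y' then 4⁻¹ else 0) :
    (((4 : ℂ)⁻¹) • (1 : Matrix (Fin 2 × Fin 2 × Fin 2) (Fin 2 × Fin 2 × Fin 2) ℂ) - T).PosSemidef := by
  have key : ((4 : ℂ)⁻¹) • (1 : Matrix (Fin 2 × Fin 2 × Fin 2) (Fin 2 × Fin 2 × Fin 2) ℂ) - T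
      = (diagonal fun u : Fin 2 × Fin 2 × Fin 2 => sg u.1 * sg u.2.1 * sg u.2.2)ᴴ *
        (T.submatrix (fun u => (1 - u.1, 1 - u.2.1, 1 - u.2.2))
          (fun u => (1 - u.1, 1 - u.2.1, 1 - u.2.2)))ᵀ *
        (diagonal fun u : Fin 2 × Fin 2 × Fin 2 => sg u.1 * sg u.2.1 * sg u.2.2) := by
    ext ⟨r, x, y⟩ ⟨r', x', y'⟩
    rw [diagonal_conjTranspose, mul_diagonal, diagonal_mul]
    simp only [Matrix.sub_apply, Matrix.smul_apply, Matrix.one_apply, Matrix.transpose_apply,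
      Matrix.submatrix_apply, Pi.star_apply, sg]
    have a1 := h1 r x r' x'
    have a2 := h2 r y r' y'
    have a3 := h3 x y x' y'
    have b1 := h1 (1 - r) x (1 - r') x'
    have b2 := h2 (1 - r) y (1 - r') y'
    have c1 := h1 r (1 - x) r' (1 - x')
    have c3 := h3 (1 - x) y (1 - x') y'
    have d2 := h2 r (1 - y) r' (1 - y')
    have d3 := h3 x (1 - y) x' (1 - y')
    have f3 := h3 (1 - x) (1 - y) (1 - x') (1 - y')
    simp only [Fin.sum_univ_two] at *
    clear h1 h2 h3
    fin_cases r <;> fin_cases x <;> fin_cases y <;> fin_cases r' <;> fin_cases x' <;> fin_cases y' <;>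
      simp at * <;> grind
  rw [key]
  exact (h.submatrix _).transpose.conjTranspose_mul_mul_same _

end QSSAux

namespace QSSAux
open Matrix
open scoped ComplexOrder
set_option linter.unusedSectionVars false

variable {m : ℕ} (ψ : (Fin m → Fin 2) → ℂ)

/-- joining assignments on disjoint sets -/
def jn (A B C : Finset (Fin m)) (hC : C = A ∪ B) (hd : Disjoint A B) :
    (({x // x ∈ A} → Fin 2) × ({x // x ∈ B} → Fin 2)) ≃ ({x // x ∈ C} → Fin 2) where
  toFun p := fun x => if h : x.1 ∈ A then p.1 ⟨x.1, h⟩ else p.2 ⟨x.1, by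
    have := (Finset.ext_iff.mp hC x.1).mp x.2
    exact (Finset.mem_union.mp this).resolve_left h⟩
  invFun w := (fun x => w ⟨x.1, by rw [hC]; exact Finset.mem_union_left _ x.2⟩,
    fun x => w ⟨x.1, by rw [hC]; exact Finset.mem_union_right _ x.2⟩)
  left_inv p := by
    ext x
    · simp
    · have : x.1 ∉ A := fun h => Finset.disjoint_left.mp hd h x.2
      simp [this]
  right_inv w := by
    ext x
    simp

def glE (A : Finset (Fin m)) :
    (({x // x ∈ A} → Fin 2) × ({x // x ∈ Aᶜ} → Fin 2)) ≃ (Fin m → Fin 2) where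
  toFun p := glue A p.1 p.2
  invFun w := (fun x => w x, fun x => w x)
  left_inv p := by
    ext x
    · simp [glue]
    · have : x.1 ∉ A := Finset.mem_compl.mp x.2
      simp [glue, this]
  right_inv w := by
    ext x
    simp [glue]

def MM (A : Finset (Fin m)) : Matrix ({x // x ∈ A} → Fin 2) ({x // x ∈ Aᶜ} → Fin 2) ℂ :=
  fun u w => ψ (glue A u w)

lemma rd_eq (A : Finset (Fin m)) : reducedDensity ψ A = MM ψ A * (MM ψ A)ᴴ := by
  ext u v
  simp [reducedDensity, Matrix.mul_apply, MM]

lemma rd_psd (A : Finset (Fin m)) : (reducedDensity ψ A).PosSemidef := by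
  rw [rd_eq]
  exact posSemidef_self_mul_conjTranspose _

lemma rd_trace (hn : ∑ x, ‖ψ x‖ ^ 2 = 1) (A : Finset (Fin m)) : (reducedDensity ψ A).trace = 1 := by
  have h1 : ((∑ x, ‖ψ x‖ ^ 2 : ℝ) : ℂ) = 1 := by rw [hn]; simp
  rw [← h1, ← Equiv.sum_comp (glE A)]
  push_cast
  rw [Fintype.sum_prod_type]
  refine Finset.sum_congr rfl fun u _ => ?_
  refine Finset.sum_congr rfl fun w _ => ?_
  exact Complex.mul_conj' _

lemma sent_compl (A : Finset (Fin m)) : Sent ψ Aᶜ = Sent ψ A := by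
  unfold Sent
  have h : reducedDensity ψ Aᶜ = ((MM ψ A)ᴴ * MM ψ A)ᵀ := by
    ext w w'
    simp only [reducedDensity, transpose_apply, Matrix.mul_apply, conjTranspose_apply, MM]
    let e : ({x // x ∈ A} → Fin 2) ≃ ({x // x ∈ Aᶜᶜ} → Fin 2) :=
      Equiv.arrowCongr (Equiv.subtypeEquivRight (by simp)) (Equiv.refl _)
    rw [← Equiv.sum_comp e]
    have hg : ∀ u w, glue Aᶜ w (e u) = glue A u w := by
      intro u w
      funext x
      by_cases hx : x ∈ A
      · simp [glue, hx, e, Equiv.arrowCongr]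
        rfl
      · simp [glue, hx]
    refine Finset.sum_congr rfl fun u _ => ?_
    rw [hg, hg, mul_comm]
    rfl
  rw [h, vn_transpose (isHermitian_conjTranspose_mul_self _), ← vn_purify, rd_eq]

lemma rd_margL (A B C : Finset (Fin m)) (hC : C = A ∪ B) (hd : Disjoint A B) (u v) :
    reducedDensity ψ A u v =
      ∑ b, reducedDensity ψ C (jn A B C hC hd (u, b)) (jn A B C hC hd (v, b)) := by
  have hC' : Aᶜ = B ∪ Cᶜ := by
    ext x
    have := @Finset.disjoint_left _ A B
    simp only [hC, Finset.mem_compl, Finset.mem_union]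
    have := fun h : x ∈ A => Finset.disjoint_left.mp hd h
    tauto
  have hd' : Disjoint B Cᶜ := by
    rw [Finset.disjoint_left]
    intro x hx
    simp [hC, hx]
  have hg : ∀ u b w, glue A u (jn B Cᶜ Aᶜ hC' hd' (b, w)) = glue C (jn A B C hC hd (u, b)) w := by
    intro u b w
    funext x
    have hC2 : x ∈ C ↔ x ∈ A ∨ x ∈ B := by rw [hC, Finset.mem_union]
    by_cases hA : x ∈ A <;> by_cases hB : x ∈ B <;> by_cases hCx : x ∈ C <;>
      first | (exfalso; tauto) | simp [glue, jn, hA, hB, hCx]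
  simp only [reducedDensity]
  rw [← Equiv.sum_comp (jn B Cᶜ Aᶜ hC' hd'), Fintype.sum_prod_type]
  simp only [hg]

lemma rd_margR (A B C : Finset (Fin m)) (hC : C = A ∪ B) (hd : Disjoint A B) (u v) :
    reducedDensity ψ B u v =
      ∑ a, reducedDensity ψ C (jn A B C hC hd (a, u)) (jn A B C hC hd (a, v)) := by
  rw [rd_margL ψ B A C (by rw [hC, Finset.union_comm]) hd.symm]
  refine Finset.sum_congr rfl fun a _ => ?_
  have : ∀ u, jn B A C (by rw [hC, Finset.union_comm]) hd.symm (u, a) = jn A B C hC hd (a, u) := by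
    intro u
    funext x
    have hx : x.1 ∈ A ∨ x.1 ∈ B := by rw [← Finset.mem_union, ← hC]; exact x.2
    have := fun h : x.1 ∈ A => Finset.disjoint_left.mp hd h
    by_cases hA : x.1 ∈ A <;> by_cases hB : x.1 ∈ B <;>
      first | (exfalso; tauto) | simp [jn, hA, hB]
  rw [this, this]

lemma sent_subadd (hn : ∑ x, ‖ψ x‖ ^ 2 = 1) (A B C : Finset (Fin m)) (hC : C = A ∪ B)
    (hd : Disjoint A B) : Sent ψ C ≤ Sent ψ A + Sent ψ B := by
  unfold Sent
  have hp := (rd_psd ψ C).submatrix (jn A B C hC hd)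
  have ht : ((reducedDensity ψ C).submatrix (jn A B C hC hd) (jn A B C hC hd)).trace = 1 := by
    rw [← rd_trace ψ hn C]
    exact Equiv.sum_comp (jn A B C hC hd) (fun u => reducedDensity ψ C u u)
  have h := vn_subadd hp ht
  rw [vn_reindex (rd_psd ψ C).isHermitian] at h
  have e1 : trR ((reducedDensity ψ C).submatrix (jn A B C hC hd) (jn A B C hC hd))
      = reducedDensity ψ A := by
    ext u v
    exact (rd_margL ψ A B C hC hd u v).symm
  have e2 : trL ((reducedDensity ψ C).submatrix (jn A B C hC hd) (jn A B C hC hd))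
      = reducedDensity ψ B := by
    ext u v
    exact (rd_margR ψ A B C hC hd u v).symm
  rwa [e1, e2] at h

lemma sent_araki (hn : ∑ x, ‖ψ x‖ ^ 2 = 1) (A B C : Finset (Fin m)) (hC : C = A ∪ B)
    (hd : Disjoint A B) : Sent ψ A ≤ Sent ψ B + Sent ψ C := by
  rw [← sent_compl ψ A, ← sent_compl ψ C]
  apply sent_subadd ψ hn
  · ext x
    simp only [hC, Finset.mem_compl, Finset.mem_union]
    have := fun h : x ∈ A => Finset.disjoint_left.mp hd h
    tauto
  · rw [Finset.disjoint_left]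
    intro x hx
    simp [hC, hx]

lemma sent_le (hn : ∑ x, ‖ψ x‖ ^ 2 = 1) (A : Finset (Fin m)) :
    Sent ψ A ≤ A.card * Real.log 2 ∧ (Sent ψ A = A.card * Real.log 2 → MaximallyMixed ψ A) := by
  have h := vn_le_log (rd_psd ψ A) (rd_trace ψ hn A)
  have hc : Fintype.card ({x // x ∈ A} → Fin 2) = 2 ^ A.card := by simp
  rw [hc] at h
  push_cast at h
  rw [Real.log_pow] at h
  exact h

/-- restriction -/
def res (A : Finset (Fin m)) (w : Fin m → Fin 2) : {x // x ∈ A} → Fin 2 := fun x => w x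

lemma rd_update (A C : Finset (Fin m)) (c : Fin m) (hC : C = A ∪ {c}) (hc : c ∉ A)
    (w w' : Fin m → Fin 2) :
    ∑ t, reducedDensity ψ C (res C (Function.update w c t)) (res C (Function.update w' c t))
      = reducedDensity ψ A (res A w) (res A w') := by
  have hd : Disjoint A {c} := by simpa using hc
  rw [rd_margL ψ A {c} C hC hd]
  let e : Fin 2 ≃ ({x // x ∈ ({c} : Finset (Fin m))} → Fin 2) :=
    { toFun := fun t _ => t
      invFun := fun f => f ⟨c, by simp⟩
      left_inv := fun t => rfl
      right_inv := fun f => by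
        funext ⟨x, hx⟩
        have := Finset.mem_singleton.mp hx
        subst this
        rfl }
  rw [← Equiv.sum_comp e]
  have : ∀ w t, jn A {c} C hC hd (res A w, e t) = res C (Function.update w c t) := by
    intro w t
    funext x
    have hx : x.1 ∈ A ∨ x.1 = c := by
      rw [← Finset.mem_singleton, ← Finset.mem_union, ← hC]; exact x.2
    by_cases hA : x.1 ∈ A
    · have : x.1 ≠ c := fun h => hc (h ▸ hA)
      simp [jn, res, hA, this]
    · have : x.1 = c := by tauto
      simp [jn, res, hA, this, hc, e]
  simp only [this]

lemma exists_fe (o a b : Fin m) (hoa : o ≠ a) (hob : o ≠ b) (hab : a ≠ b) :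
    ∃ (f : Fin 2 × Fin 2 × Fin 2 → Fin m → Fin 2)
      (e : (Fin 2 × Fin 2 × Fin 2) ≃ ({x // x ∈ ({o, a, b} : Finset (Fin m))} → Fin 2)),
      (∀ t, e t = res _ (f t)) ∧ (∀ t, f t o = t.1) ∧ (∀ t, f t a = t.2.1) ∧
        (∀ t, f t b = t.2.2) := by
  let f : Fin 2 × Fin 2 × Fin 2 → Fin m → Fin 2 := fun t p =>
    if p = o then t.1 else if p = a then t.2.1 else t.2.2
  let e : (Fin 2 × Fin 2 × Fin 2) ≃ ({x // x ∈ ({o, a, b} : Finset (Fin m))} → Fin 2) :=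
    { toFun := fun t => res _ (f t)
      invFun := fun w => (w ⟨o, by simp⟩, w ⟨a, by simp⟩, w ⟨b, by simp⟩)
      left_inv := fun t => by
        simp [res, f, hoa.symm, hob.symm, hab.symm]
      right_inv := fun w => by
        funext ⟨x, hx⟩
        have hx' := hx
        simp only [Finset.mem_insert, Finset.mem_singleton] at hx'
        rcases hx' with h | h | h <;> subst h
        · simp [res, f]
        · simp [res, f, hoa.symm]
        · simp [res, f, hob.symm, hab.symm] }
  refine ⟨f, e, fun t => rfl, fun t => ?_, fun t => ?_, fun t => ?_⟩
  · simp [f]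
  · simp [f, hoa.symm]
  · simp [f, hob.symm, hab.symm]

lemma un1 (o a b : Fin m) : ({o, a, b} : Finset (Fin m)) = {o, a} ∪ {b} := by
  ext p
  simp only [Finset.mem_insert, Finset.mem_union, Finset.mem_singleton, or_assoc]

lemma un2 (o a b : Fin m) : ({o, a, b} : Finset (Fin m)) = {o, b} ∪ {a} := by
  ext p
  simp only [Finset.mem_insert, Finset.mem_union, Finset.mem_singleton, or_assoc,
    or_comm (a := p = a)]

lemma un3 (o a b : Fin m) : ({o, a, b} : Finset (Fin m)) = {a, b} ∪ {o} := by
  ext p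
  simp only [Finset.mem_insert, Finset.mem_union, Finset.mem_singleton, or_comm (a := p = o)]

lemma no_ame (hn : ∑ x, ‖ψ x‖ ^ 2 = 1) (o a b : Fin m) (hoa : o ≠ a) (hob : o ≠ b) (hab : a ≠ b)
    (h1 : MaximallyMixed ψ {o, a}) (h2 : MaximallyMixed ψ {o, b}) (h3 : MaximallyMixed ψ {a, b}) :
    2 * Real.log 2 ≤ Sent ψ {o, a, b} := by
  obtain ⟨f, e, hfe, fo, fa, fb⟩ := exists_fe o a b hoa hob hab
  obtain ⟨T, hT⟩ : ∃ T, T = (reducedDensity ψ {o, a, b}).submatrix e e := ⟨_, rfl⟩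
  have hTa : ∀ s t, T s t = reducedDensity ψ {o, a, b} (e s) (e t) := by
    intro s t
    rw [hT, submatrix_apply]
  have hp : T.PosSemidef := hT ▸ (rd_psd ψ _).submatrix e
  have ht : T.trace = 1 := by
    rw [← rd_trace ψ hn {o, a, b}, hT]
    exact Equiv.sum_comp e (fun u => reducedDensity ψ {o, a, b} u u)
  have hS : Sent ψ {o, a, b} = vnEntropy T := by
    rw [hT]
    exact (vn_reindex (rd_psd ψ _).isHermitian e).symm
  have hres : ∀ t (w : Fin m → Fin 2), w o = t.1 → w a = t.2.1 → w b = t.2.2 →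
      e t = res {o, a, b} w := by
    intro t w h1 h2 h3
    rw [hfe]
    funext ⟨x, hx⟩
    simp only [Finset.mem_insert, Finset.mem_singleton] at hx
    rcases hx with h | h | h <;> subst h
    · exact (fo t).trans h1.symm
    · exact (fa t).trans h2.symm
    · exact (fb t).trans h3.symm
  have u1 : ∀ r x y, e (r, x, y) = res _ (Function.update (f (r, x, 0)) b y) := by
    intro r x y
    apply hres <;> simp [fo, fa, hob, hab]
  have u2 : ∀ r x y, e (r, x, y) = res _ (Function.update (f (r, 0, y)) a x) := by
    intro r x y
    apply hres <;> simp [fo, fb, hoa, hab.symm]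
  have u3 : ∀ r x y, e (r, x, y) = res _ (Function.update (f (0, x, y)) o r) := by
    intro r x y
    apply hres <;> simp [fa, fb, hoa.symm, hob.symm]
  have hm : ∀ p q : Fin m, p ≠ q → MaximallyMixed ψ {p, q} → ∀ w w' : Fin m → Fin 2,
      reducedDensity ψ {p, q} (res _ w) (res _ w') = if w p = w' p ∧ w q = w' q then 4⁻¹ else 0 := by
    intro p q hpq h w w'
    rw [h, Finset.card_pair hpq, Matrix.smul_apply, Matrix.one_apply]
    have : res {p, q} w = res {p, q} w' ↔ w p = w' p ∧ w q = w' q := by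
      constructor
      · intro h
        exact ⟨congrFun h ⟨p, by simp⟩, congrFun h ⟨q, by simp⟩⟩
      · rintro ⟨h1, h2⟩
        funext ⟨x, hx⟩
        simp only [Finset.mem_insert, Finset.mem_singleton] at hx
        rcases hx with h | h <;> subst h <;> assumption
    simp only [this]
    split_ifs <;> norm_num
  have m1 : ∀ r x r' x', ∑ y, T (r, x, y) (r', x', y) = if r = r' ∧ x = x' then 4⁻¹ else 0 := by
    intro r x r' x'
    simp only [hTa, u1]
    rw [rd_update ψ {o, a} {o, a, b} b (un1 o a b) (by simp [hob.symm, hab.symm]), hm o a hoa h1]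
    simp only [fo, fa]
  have m2 : ∀ r y r' y', ∑ x, T (r, x, y) (r', x, y') = if r = r' ∧ y = y' then 4⁻¹ else 0 := by
    intro r x r' x'
    simp only [hTa, u2]
    rw [rd_update ψ {o, b} {o, a, b} a (un2 o a b) (by simp [hoa.symm, hab]), hm o b hob h2]
    simp only [fo, fb]
  have m3 : ∀ x y x' y', ∑ r, T (r, x, y) (r, x', y') = if x = x' ∧ y = y' then 4⁻¹ else 0 := by
    intro r x r' x'
    simp only [hTa, u3]
    rw [rd_update ψ {a, b} {o, a, b} o (un3 o a b) (by simp [hoa, hob]), hm a b hab h3]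
    simp only [fa, fb]
  have hle := spin_flip hp m1 m2 m3
  rw [hS]
  refine le_trans (le_of_eq ?_) (vn_lower hp ht hle)
  rw [show (4 : ℝ) = 2 ^ 2 by norm_num, Real.log_pow]
  norm_num

lemma no_pair (hn : ∑ x, ‖ψ x‖ ^ 2 = 1) (o a b : Fin m) (hoa : o ≠ a) (hob : o ≠ b) (hab : a ≠ b)
    (ha : Sent ψ {o} + Sent ψ {a} - Sent ψ {o, a} = 0)
    (hb : Sent ψ {o} + Sent ψ {b} - Sent ψ {o, b} = 0)
    (hc : Sent ψ {o} + Sent ψ {a, b} - Sent ψ {o, a, b} = 2 * Real.log 2) : False := by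
  have l2 : 0 < Real.log 2 := Real.log_pos (by norm_num)
  have s0 := (sent_le ψ hn {o}).1
  have sa := (sent_le ψ hn {a}).1
  have sb := (sent_le ψ hn {b}).1
  simp only [Finset.card_singleton, Nat.cast_one, one_mul] at s0 sa sb
  have k1 := sent_araki ψ hn {a, b} {o} {o, a, b} (un3 o a b) (by simp [hoa, hob])
  have k2 := sent_araki ψ hn {o, a} {b} {o, a, b} (un1 o a b) (by simp [hab.symm, hob.symm])
  have k3 := sent_araki ψ hn {o, b} {a} {o, a, b} (un2 o a b) (by simp [hab, hoa.symm])
  have k4 := sent_subadd ψ hn {a} {b} {a, b} (by ext; simp) (by simp [hab])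
  have e1 := (sent_le ψ hn {o, a}).2
  have e2 := (sent_le ψ hn {o, b}).2
  have e3 := (sent_le ψ hn {a, b}).2
  rw [Finset.card_pair hoa] at e1
  rw [Finset.card_pair hob] at e2
  rw [Finset.card_pair hab] at e3
  push_cast at e1 e2 e3
  have := no_ame ψ hn o a b hoa hob hab (e1 (by linarith)) (e2 (by linarith)) (e3 (by linarith))
  linarith

end QSSAux

theorem stmt14 (Γ : Finset (Fin 5) → Prop)
    (hmono : Monotonic Γ) (hnc : NoCloning Γ) (hnr : NoRedundancy Γ)
    (ψ : (Fin (5 + 1) → Fin 2) → ℂ) (hψ : IsPureQSSState Γ ψ) :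
    ∃ k : ℕ, ∀ A : Finset (Fin 5), IsMinimal Γ A → A.card = k := by
  -- singletons are unauthorized
  have hsing : ∀ i, ¬ Γ {i} := by
    intro i hi
    obtain ⟨j, hj⟩ : ∃ j : Fin 5, j ≠ i := exists_ne i
    obtain ⟨A, hA, hjA⟩ := hnr j
    by_cases hiA : i ∈ A
    · refine hA.2 {i} ?_ hi
      rw [Finset.ssubset_iff_of_subset (by simpa using hiA)]
      exact ⟨j, hjA, by simpa using hj⟩
    · refine (hnc {i}).mp hi (hmono A _ hA.1 ?_)
      intro x hx
      simp only [Finset.mem_compl, Finset.mem_singleton]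
      rintro rfl
      exact hiA hx
  have hpair : ∀ a b, a ≠ b → ¬ Γ {a, b} := by
    intro a b hab h
    have h1 := hψ.secrecy _ (hsing a)
    have h2 := hψ.secrecy _ (hsing b)
    have h3 := hψ.recover _ h
    simp only [posOf, Finset.image_singleton, Finset.image_insert] at h1 h2 h3
    exact QSSAux.no_pair ψ hψ.normalized 0 a.succ b.succ (Fin.succ_ne_zero a).symm
      (Fin.succ_ne_zero b).symm (fun h => hab (Fin.succ_injective _ h)) h1 h2 h3
  have hfull : Γ Finset.univ := by
    obtain ⟨A, hA, -⟩ := hnr 0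
    exact hmono A _ hA.1 (Finset.subset_univ A)
  have hsmall : ∀ A : Finset (Fin 5), A.card ≤ 2 → ¬ Γ A := by
    intro A hA hG
    have : A.card = 0 ∨ A.card = 1 ∨ A.card = 2 := by omega
    rcases this with h | h | h
    · rw [Finset.card_eq_zero] at h
      subst h
      exact (hnc _).mp hG (by simpa using hfull)
    · obtain ⟨i, rfl⟩ := Finset.card_eq_one.mp h
      exact hsing i hG
    · obtain ⟨a, b, hab, rfl⟩ := Finset.card_eq_two.mp h
      exact hpair a b hab hG
  have hbig : ∀ A : Finset (Fin 5), 3 ≤ A.card → Γ A := by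
    intro A hA
    rw [hnc]
    apply hsmall
    rw [Finset.card_compl, Fintype.card_fin]
    omega
  refine ⟨3, fun A hA => ?_⟩
  have h3 : 3 ≤ A.card := by
    by_contra h
    exact hsmall A (by omega) hA.1
  by_contra hne
  obtain ⟨B, hBA, hB⟩ := Finset.exists_subset_card_eq h3
  refine hA.2 B ?_ (hbig B hB.ge)
  refine lt_of_le_of_ne hBA ?_
  rintro rfl
  exact hne hB
end
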